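/- arXiv:1911.12822 — 2 statements merged into one kernel-verified Lean document; each statement's English description precedes it below -/
import Mathlib

section
/- Fix n ≥ 2. For 0 < ρ < σ < ∞, v ∈ L¹(B_σ) and s > 1, define J(ρ,σ,v) := inf{ ∫_{B_σ} |v| |∇η|^s dx : η ∈ C₀¹(B_σ), η ≥ 0, η = 1 on B_ρ }. Then for every δ ∈ (0,1], J(ρ,σ,v) ≤ (σ−ρ)^{−(s−1+1/δ)} ( ∫_ρ^σ ( ∫_{S_r} |v| dH^{n−1} )^δ dr )^{1/δ}, where S_r denotes the sphere of radius r centered at the origin and the inner integral is with respect to (n−1)-dimensional surface measure. -/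
open MeasureTheory Metric Set
open scoped ENNReal NNReal Topology

noncomputable section

/-! For a radial cutoff `η x = ∫ t in ‖x‖..σ, ψ t`, where `ψ ≥ 0` has integral `1` over `(ρ, σ)`,
one has `‖∇η x‖ ≤ ψ ‖x‖`. In polar coordinates the energy of `η` is therefore at most
`∫ f r * ψ r ^ s dr`, where `f r` is the integral of `|v|` over the sphere of radius `r`. This
one-dimensional functional is minimised by `ψ` proportional to `f ^ (-1 / (s - 1))`, and Hölder's
inequality bounds the minimum by the right-hand side of the claim. Replacing `f` by `f + ε` and
approximating by continuous functions of compact support makes `ψ` an admissible profile.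

Polar coordinates in Mathlib use the surface measure `Measure.toSphere`, defined through volumes of
cones, whereas the theorem uses the unnormalised Hausdorff measure `μH`. For the upper bound on the
energy it is enough that `toSphere ≤ μH`. A Vitali covering argument gives `μH ≤ C • toSphere`,
which makes the sphere integrals of an integrable function integrable in `r`. -/

section HausdorffMeasureOfLowerRegular

open Filter

variable {X : Type*} [MetricSpace X] [SecondCountableTopology X] [MeasurableSpace X] [BorelSpace X]

lemma exists_countable_cover_tsum_ediam_rpow_le {τ : Measure X} {C : ℝ≥0∞} {d R : ℝ} (hd : 0 ≤ d)
    (hR : 0 < R) (h : ∀ x, ∀ r ∈ Ioc 0 R, ENNReal.ofReal r ^ d ≤ C * τ (closedBall x r))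
    {U : Set X} (hU : IsOpen U) {ε : ℝ} (hε : 0 < ε) :
    ∃ (u : Set X) (r : X → ℝ), u.Countable ∧ U ⊆ ⋃ x : u, closedBall (x : X) (r x) ∧
      (∀ x : u, ediam (closedBall (x : X) (r x)) ≤ ENNReal.ofReal ε) ∧
      ∑' x : u, ediam (closedBall (x : X) (r x)) ^ d ≤ 10 ^ d * C * τ U := by
  have hex (x : X) : ∃ r, 0 < r ∧ r ≤ R ∧ r ≤ ε / 10 ∧ (x ∈ U → closedBall x r ⊆ U) := by
    by_cases hx : x ∈ U
    · obtain ⟨q, hq, hqU⟩ := nhds_basis_closedBall.mem_iff.1 (hU.mem_nhds hx)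
      exact ⟨min q (min R (ε / 10)), by positivity, by simp, by simp,
        fun _ => (closedBall_subset_closedBall (min_le_left _ _)).trans hqU⟩
    · exact ⟨min R (ε / 10), by positivity, by simp, by simp, fun hx' => absurd hx' hx⟩
  choose r hr0 hrR hrε hrU using hex
  obtain ⟨u, huU, hdisj, hcover⟩ := Vitali.exists_disjoint_subfamily_covering_enlargement_closedBall
    U id r (ε / 10) (fun x _ => hrε x) 5 (by norm_num)
  have hcount : u.Countable := hdisj.countable_of_nonempty_interior fun x _ =>
    ⟨x, ball_subset_interior_closedBall (mem_ball_self (hr0 x))⟩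
  have hdiam (x : X) : ediam (closedBall x (5 * r x)) ≤ 10 * ENNReal.ofReal (r x) := by
    rw [← closedEBall_ofReal (by linarith [hr0 x])]
    refine ediam_closedEBall_le.trans_eq ?_
    rw [ENNReal.ofReal_mul (by norm_num), ENNReal.ofReal_ofNat, ← mul_assoc]
    norm_num
  refine ⟨u, fun x => 5 * r x, hcount, fun x hx => ?_, fun x => ?_, ?_⟩
  · obtain ⟨y, hy, hxy⟩ := hcover x hx
    exact mem_iUnion.2 ⟨⟨y, hy⟩, hxy (mem_closedBall_self (hr0 x).le)⟩
  · refine (hdiam x).trans ?_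
    rw [← ENNReal.ofReal_ofNat, ← ENNReal.ofReal_mul (by norm_num)]
    exact ENNReal.ofReal_le_ofReal (by linarith [hrε x])
  · have := hcount.to_subtype
    calc ∑' x : u, ediam (closedBall (x : X) (5 * r x)) ^ d
        ≤ ∑' x : u, 10 ^ d * C * τ (closedBall (x : X) (r x)) := by
          refine ENNReal.tsum_le_tsum fun x => (ENNReal.rpow_le_rpow (hdiam x) hd).trans ?_
          rw [ENNReal.mul_rpow_of_nonneg _ _ hd, mul_assoc]
          gcongr
          exact h x _ ⟨hr0 x, hrR x⟩
      _ = 10 ^ d * C * τ (⋃ x ∈ u, closedBall x (r x)) := by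
          rw [ENNReal.tsum_mul_left]
          exact congrArg _
            (measure_biUnion hcount hdisj fun x _ => isClosed_closedBall.measurableSet).symm
      _ ≤ 10 ^ d * C * τ U := by
          gcongr
          exact iUnion₂_subset fun x hx => hrU x (huU hx)

lemma hausdorffMeasure_le_smul_of_rpow_le_measure_closedBall {τ : Measure X} [τ.OuterRegular]
    {C : ℝ≥0} {d R : ℝ} (hd : 0 ≤ d) (hR : 0 < R)
    (h : ∀ x, ∀ r ∈ Ioc 0 R, ENNReal.ofReal r ^ d ≤ C * τ (closedBall x r)) :
    μH[d] ≤ (10 ^ d * C : ℝ≥0) • τ := by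
  have hopen (U : Set X) (hU : IsOpen U) : μH[d] U ≤ 10 ^ d * C * τ U := by
    choose u r hcount hcover hdiam hsum using fun m : ℕ =>
      exists_countable_cover_tsum_ediam_rpow_le hd hR h hU
        (Nat.one_div_pos_of_nat (α := ℝ) (n := m))
    have := fun m => (hcount m).to_subtype
    have hlim : Tendsto (fun m : ℕ => ENNReal.ofReal (1 / ((m : ℝ) + 1))) atTop (𝓝 0) := by
      simpa using ENNReal.tendsto_ofReal tendsto_one_div_add_atTop_nhds_zero_nat
    exact (Measure.hausdorffMeasure_le_liminf_tsum d U _ hlim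
      (fun m (x : u m) => closedBall (x : X) (r m x)) (.of_forall hdiam)
      (.of_forall hcover)).trans (liminf_le_of_frequently_le' (.of_forall hsum))
  refine Measure.le_iff'.2 fun s => ?_
  have : ((10 ^ d * C : ℝ≥0) • τ).OuterRegular := .smul_nnreal τ _
  rw [s.measure_eq_iInf_isOpen ((10 ^ d * C : ℝ≥0) • τ)]
  refine le_iInf₂ fun U hsU => le_iInf fun hU => (measure_mono hsU).trans ((hopen U hU).trans_eq ?_)
  simp [Measure.nnreal_smul_coe_apply, ENNReal.coe_rpow_of_nonneg _ hd]

end HausdorffMeasureOfLowerRegular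

section SphereMeasure

open Filter Module
open scoped Pointwise

lemma volumeIoiPow_preimage_Ioo (k : ℕ) {a b : ℝ} (ha : 0 ≤ a) :
    Measure.volumeIoiPow k (Subtype.val ⁻¹' Ioo a b) =
      ∫⁻ r in Ioo a b, ENNReal.ofReal (r ^ k) := by
  rw [Measure.volumeIoiPow,
    withDensity_apply _ (measurableSet_Ioo.preimage measurable_subtype_coe),
    setLIntegral_subtype measurableSet_Ioi _ fun r : ℝ => ENNReal.ofReal (r ^ k),
    image_preimage_eq_of_subset]
  rw [Subtype.range_coe]
  exact fun r hr => ha.trans_lt hr.1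

section NormedSpace

variable {E : Type*} [NormedAddCommGroup E] [NormedSpace ℝ E]

lemma dist_inv_norm_smul_le {x y : E} (hx : ‖x‖ = 1) (hy : y ≠ 0) :
    dist (‖y‖⁻¹ • y) x ≤ 2 * dist y x := by
  have hnorm : dist (‖y‖⁻¹ • y) y = |1 - ‖y‖| := by
    have : ‖y‖⁻¹ • y - y = ((1 - ‖y‖) * ‖y‖⁻¹) • y := by
      rw [sub_mul, sub_smul, one_mul, mul_inv_cancel₀ (norm_ne_zero_iff.2 hy), one_smul]
    rw [dist_eq_norm, this, norm_smul, norm_mul, norm_inv, norm_norm, mul_assoc,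
      inv_mul_cancel₀ (norm_ne_zero_iff.2 hy), mul_one, Real.norm_eq_abs]
  have hsub : |1 - ‖y‖| ≤ dist y x := by
    rw [← hx, dist_comm, dist_eq_norm]
    exact abs_norm_sub_norm_le x y
  linarith [dist_triangle (‖y‖⁻¹ • y) y x]

lemma ball_subset_Ioo_smul_closedBall (x : sphere (0 : E) 1) {r : ℝ} (hr : r ≤ 1) :
    ball (x : E) r ⊆ Ioo (1 - r) (1 + r) • (Subtype.val '' closedBall x (2 * r)) := by
  intro y hy
  have hx : ‖(x : E)‖ = 1 := by simp
  have hyx : |‖y‖ - 1| < r := by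
    rw [← hx]
    exact (abs_norm_sub_norm_le y x).trans_lt (mem_ball_iff_norm.1 hy)
  rw [abs_lt] at hyx
  have hy0 : ‖y‖ ≠ 0 := by linarith
  refine ⟨‖y‖, ⟨by linarith, by linarith⟩, ‖y‖⁻¹ • y, ⟨⟨‖y‖⁻¹ • y, ?_⟩, ?_, rfl⟩, ?_⟩
  · simp [norm_smul, hy0]
  · rw [mem_closedBall, Subtype.dist_eq]
    refine (dist_inv_norm_smul_le hx (norm_ne_zero_iff.1 hy0)).trans ?_
    linarith [mem_ball.1 hy]
  · simp [hy0]

variable [FiniteDimensional ℝ E] [MeasurableSpace E] [BorelSpace E]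

lemma addHaar_Ioo_smul_sphere (μ : Measure E) [μ.IsAddHaarMeasure] {a b : ℝ}
    (ha : 0 ≤ a) {s : Set (sphere (0 : E) 1)} (hs : MeasurableSet s) :
    μ (Ioo a b • (Subtype.val '' s)) =
      μ.toSphere s * ∫⁻ r in Ioo a b, ENNReal.ofReal (r ^ (finrank ℝ E - 1)) := by
  have hset : Subtype.val '' (homeomorphUnitSphereProd E ⁻¹' (s ×ˢ (Subtype.val ⁻¹' Ioo a b))) =
      Ioo a b • (Subtype.val '' s) := by
    rw [← Homeomorph.image_symm, image_image]
    refine Subset.antisymm ?_ ?_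
    · rintro _ ⟨⟨y, r⟩, ⟨hy, hr⟩, rfl⟩
      exact ⟨r, hr, y, ⟨y, hy, rfl⟩, by simp⟩
    · rintro _ ⟨r, hr, _, ⟨y, hy, rfl⟩, rfl⟩
      exact ⟨(y, ⟨r, ha.trans_lt hr.1⟩), ⟨hy, hr⟩, by simp⟩
  rw [← volumeIoiPow_preimage_Ioo _ ha, ← Measure.prod_prod,
    ← μ.measurePreserving_homeomorphUnitSphereProd.measure_preimage
      (hs.prod (measurableSet_Ioo.preimage measurable_subtype_coe)).nullMeasurableSet,
    comap_subtype_coe_apply (measurableSet_singleton _).compl, hset]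

lemma toSphere_mul_ofReal_le_addHaar_Ioo_smul_sphere (μ : Measure E) [μ.IsAddHaarMeasure] (h : ℝ)
    {s : Set (sphere (0 : E) 1)} (hs : MeasurableSet s) :
    μ.toSphere s * ENNReal.ofReal h ≤ μ (Ioo 1 (1 + h) • (Subtype.val '' s)) := by
  rw [addHaar_Ioo_smul_sphere μ zero_le_one hs]
  gcongr
  calc ENNReal.ofReal h = ∫⁻ _ in Ioo (1 : ℝ) (1 + h), 1 := by simp
    _ ≤ ∫⁻ r in Ioo (1 : ℝ) (1 + h), ENNReal.ofReal (r ^ (finrank ℝ E - 1)) :=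
      setLIntegral_mono (by fun_prop) fun r hr => by simpa using one_le_pow₀ hr.1.le

lemma ofReal_pow_mul_addHaar_ball_le_toSphere_closedBall (μ : Measure E) [μ.IsAddHaarMeasure]
    (x : sphere (0 : E) 1) {r : ℝ} (hr : r ∈ Ioc 0 1) :
    ENNReal.ofReal r ^ (finrank ℝ E - 1) * μ (ball 0 1) ≤
      2 ^ finrank ℝ E * μ.toSphere (closedBall x (2 * r)) := by
  have : Nontrivial E := ⟨⟨x, 0, ne_of_apply_ne Norm.norm (by simp)⟩⟩
  obtain ⟨k, hk⟩ : ∃ k, finrank ℝ E = k + 1 := Nat.exists_eq_add_one.2 finrank_pos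
  have hr0 : ENNReal.ofReal r ≠ 0 := by simpa using hr.1
  have hradial : ∫⁻ t in Ioo (1 - r) (1 + r), ENNReal.ofReal (t ^ k) ≤
      2 ^ (k + 1) * ENNReal.ofReal r := by
    calc ∫⁻ t in Ioo (1 - r) (1 + r), ENNReal.ofReal (t ^ k)
        ≤ ∫⁻ t in Ioo (1 - r) (1 + r), ENNReal.ofReal (2 ^ k) := by
          refine setLIntegral_mono (by fun_prop) fun t ht => ENNReal.ofReal_le_ofReal ?_
          exact pow_le_pow_left₀ (by linarith [ht.1, hr.2]) (by linarith [ht.2, hr.2]) k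
      _ = 2 ^ (k + 1) * ENNReal.ofReal r := by
          rw [setLIntegral_const, Real.volume_Ioo, ← ENNReal.ofReal_mul (by positivity),
            show (2 : ℝ) ^ k * (1 + r - (1 - r)) = 2 ^ (k + 1) * r by ring,
            ENNReal.ofReal_mul (by positivity), ENNReal.ofReal_pow (by norm_num),
            ENNReal.ofReal_ofNat]
  refine (ENNReal.mul_le_mul_iff_left hr0 ENNReal.ofReal_ne_top).1 ?_
  calc ENNReal.ofReal r ^ (finrank ℝ E - 1) * μ (ball 0 1) * ENNReal.ofReal r
      = μ (ball (x : E) r) := by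
        rw [Measure.addHaar_ball_of_pos μ _ hr.1, hk, ENNReal.ofReal_pow hr.1.le]
        simp only [add_tsub_cancel_right]
        ring
    _ ≤ μ (Ioo (1 - r) (1 + r) • (Subtype.val '' closedBall x (2 * r))) :=
        measure_mono (ball_subset_Ioo_smul_closedBall x hr.2)
    _ = μ.toSphere (closedBall x (2 * r)) *
          ∫⁻ t in Ioo (1 - r) (1 + r), ENNReal.ofReal (t ^ k) := by
        rw [addHaar_Ioo_smul_sphere μ (by linarith [hr.2]) isClosed_closedBall.measurableSet, hk,
          add_tsub_cancel_right]
    _ ≤ μ.toSphere (closedBall x (2 * r)) * (2 ^ (k + 1) * ENNReal.ofReal r) := by gcongr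
    _ = 2 ^ finrank ℝ E * μ.toSphere (closedBall x (2 * r)) * ENNReal.ofReal r := by
        rw [hk]
        ring

lemma exists_hausdorffMeasure_sphere_le_smul_toSphere (μ : Measure E) [μ.IsAddHaarMeasure] :
    ∃ C : ℝ≥0, μH[((finrank ℝ E - 1 : ℕ) : ℝ)] ≤ C • μ.toSphere := by
  have hball : μ (ball 0 1) ≠ 0 := (measure_ball_pos μ 0 one_pos).ne'
  set k := finrank ℝ E - 1 with hk
  set C : ℝ≥0 := (2 ^ k * (2 ^ finrank ℝ E / μ (ball 0 1))).toNNReal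
  have hC' : (C : ℝ≥0∞) = 2 ^ k * (2 ^ finrank ℝ E / μ (ball 0 1)) :=
    ENNReal.coe_toNNReal (by finiteness)
  refine ⟨_, hausdorffMeasure_le_smul_of_rpow_le_measure_closedBall (C := C) k.cast_nonneg
    two_pos fun x r hr => ?_⟩
  have hx := ofReal_pow_mul_addHaar_ball_le_toSphere_closedBall μ x (r := r / 2)
    ⟨by linarith [hr.1], by linarith [hr.2]⟩
  rw [mul_div_cancel₀ r two_ne_zero, ← hk,
    ← ENNReal.le_div_iff_mul_le (.inl hball) (.inl (by finiteness))] at hx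
  calc ENNReal.ofReal r ^ (k : ℝ) = 2 ^ k * ENNReal.ofReal (r / 2) ^ k := by
        rw [ENNReal.rpow_natCast, ← mul_pow, ← ENNReal.ofReal_ofNat, ← ENNReal.ofReal_mul (by simp),
          mul_div_cancel₀ r two_ne_zero]
    _ ≤ 2 ^ k * (2 ^ finrank ℝ E * μ.toSphere (closedBall x r) / μ (ball 0 1)) := by gcongr
    _ = C * μ.toSphere (closedBall x r) := by
        rw [hC', ENNReal.mul_div_right_comm, mul_assoc]

end NormedSpace

section InnerProductSpace

variable {E : Type*} [NormedAddCommGroup E] [InnerProductSpace ℝ E]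

lemma one_sub_sq_half_le_inner {x y : E} (hx : ‖x‖ = 1) (hy : ‖y‖ = 1) :
    1 - dist x y ^ 2 / 2 ≤ inner ℝ x y := by
  have := norm_sub_sq_real x y
  rw [hx, hy, ← dist_eq_norm] at this
  linarith

lemma exists_orthonormalBasis_apply_eq [FiniteDimensional ℝ E] {e : E} (he : ‖e‖ = 1) :
    ∃ (b : OrthonormalBasis (Fin (finrank ℝ E)) ℝ E) (i : Fin (finrank ℝ E)), b i = e := by
  have : Nontrivial E := ⟨⟨e, 0, ne_of_apply_ne Norm.norm (by simp [he])⟩⟩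
  let i : Fin (finrank ℝ E) := ⟨0, finrank_pos⟩
  obtain ⟨b, hb⟩ := Orthonormal.exists_orthonormalBasis_extension_of_card_eq (𝕜 := ℝ)
    (ι := Fin (finrank ℝ E)) (by simp) (v := fun _ => e) (s := {i})
    (by rw [orthonormal_iff_ite]; rintro ⟨x, rfl⟩ ⟨y, rfl⟩; simp [he])
  exact ⟨b, i, hb i rfl⟩

lemma ediam_inner_image_Ioo_smul_le {s : Set (sphere (0 : E) 1)} {e : sphere (0 : E) 1}
    (hes : e ∈ s) {h : ℝ} (h1 : h ≤ 1) (hs : ediam s ≤ ENNReal.ofReal h) :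
    ediam ((fun x => inner ℝ (e : E) x) '' (Ioo 1 (1 + h) • (Subtype.val '' s))) ≤
      ENNReal.ofReal (h + h ^ 2 / 2) := by
  refine (ediam_mono (t := Icc (1 - h ^ 2 / 2) (1 + h)) ?_).trans ?_
  · rintro _ ⟨_, ⟨t, ht, _, ⟨x, hx, rfl⟩, rfl⟩, rfl⟩
    have hh : 0 < h := by linarith [ht.1, ht.2]
    have hdist : dist (e : E) x ≤ h :=
      (edist_le_ofReal hh.le).1 ((edist_le_ediam_of_mem hes hx).trans hs)
    have hle : inner ℝ (e : E) (x : E) ≤ 1 := by simpa using real_inner_le_norm (e : E) x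
    have hge := one_sub_sq_half_le_inner (x := (e : E)) (y := x) (by simp) (by simp)
    have hge' : 1 - h ^ 2 / 2 ≤ inner ℝ (e : E) (x : E) := by
      nlinarith [dist_nonneg (x := (e : E)) (y := x)]
    have hpos : 0 ≤ inner ℝ (e : E) (x : E) := by nlinarith
    simp only [inner_smul_right]
    exact ⟨by nlinarith [ht.1], by nlinarith [ht.1, ht.2]⟩
  · rw [Real.ediam_Icc]
    exact ENNReal.ofReal_le_ofReal (by linarith)

lemma ediam_inner_image_Ioo_smul_le_of_inner_eq_zero {s : Set (sphere (0 : E) 1)}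
    {e : sphere (0 : E) 1} (hes : e ∈ s) {h : ℝ} {w : E} (hw : ‖w‖ = 1)
    (hwe : inner ℝ w (e : E) = 0) :
    ediam ((fun x => inner ℝ w x) '' (Ioo 1 (1 + h) • (Subtype.val '' s))) ≤
      ENNReal.ofReal (1 + 2 * h) * ediam s := by
  refine ediam_image_le_iff.2 ?_
  rintro _ ⟨t, ht, _, ⟨x, hx, rfl⟩, rfl⟩ _ ⟨t', ht', _, ⟨x', hx', rfl⟩, rfl⟩
  have hh : 0 < h := by linarith [ht.1, ht.2]
  have hinner (y z : sphere (0 : E) 1) : |inner ℝ w (y : E) - inner ℝ w (z : E)| ≤ dist y z := by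
    rw [← inner_sub_right, Subtype.dist_eq, dist_eq_norm]
    simpa [hw] using abs_real_inner_le_norm w ((y : E) - z)
  have hxe : |inner ℝ w (x' : E)| ≤ dist x' e := by simpa [hwe] using hinner x' e
  have htt' : |t - t'| ≤ h := abs_le.2 ⟨by linarith [ht.1, ht'.2], by linarith [ht.2, ht'.1]⟩
  have hdist : |t * inner ℝ w (x : E) - t' * inner ℝ w (x' : E)| ≤
      (1 + h) * dist x x' + h * dist x' e := by
    calc |t * inner ℝ w (x : E) - t' * inner ℝ w (x' : E)|
        = |t * (inner ℝ w (x : E) - inner ℝ w (x' : E)) + (t - t') * inner ℝ w (x' : E)| := by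
          ring_nf
      _ ≤ |t| * |inner ℝ w (x : E) - inner ℝ w (x' : E)| + |t - t'| * |inner ℝ w (x' : E)| := by
          rw [← abs_mul, ← abs_mul]
          exact abs_add_le _ _
      _ ≤ _ := by
          gcongr
          · rw [abs_of_pos (by linarith [ht.1])]
            exact ht.2.le
          · exact hinner x x'
  rw [edist_dist, Real.dist_eq, inner_smul_right, inner_smul_right]
  calc ENNReal.ofReal |t * inner ℝ w (x : E) - t' * inner ℝ w (x' : E)|
      ≤ ENNReal.ofReal (1 + h) * edist x x' + ENNReal.ofReal h * edist x' e := by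
        rw [edist_dist, edist_dist, ← ENNReal.ofReal_mul (by positivity),
          ← ENNReal.ofReal_mul hh.le, ← ENNReal.ofReal_add (by positivity) (by positivity)]
        exact ENNReal.ofReal_le_ofReal hdist
    _ ≤ ENNReal.ofReal (1 + h) * ediam s + ENNReal.ofReal h * ediam s := by
        gcongr
        · exact edist_le_ediam_of_mem hx hx'
        · exact edist_le_ediam_of_mem hx' hes
    _ = ENNReal.ofReal (1 + 2 * h) * ediam s := by
        rw [← add_mul, ← ENNReal.ofReal_add (by positivity) hh.le]
        ring_nf

variable [FiniteDimensional ℝ E] [MeasurableSpace E] [BorelSpace E]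

lemma volume_le_prod_ediam_image_inner {ι : Type*} [Fintype ι] (b : OrthonormalBasis ι ℝ E)
    (s : Set E) : volume s ≤ ∏ i, ediam ((fun x => inner ℝ (b i) x) '' s) := by
  let Φ : E ≃ᵐ (ι → ℝ) := b.measurableEquiv.trans (MeasurableEquiv.toLp 2 (ι → ℝ)).symm
  have hΦ : MeasurePreserving Φ :=
    (PiLp.volume_preserving_ofLp ι).comp b.measurePreserving_measurableEquiv
  have hcoord (i : ι) : Function.eval i '' (Φ '' s) = (fun x => inner ℝ (b i) x) '' s := by
    rw [image_image]
    exact image_congr fun x _ => b.repr_apply_apply x i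
  calc volume s = volume (Φ '' s) := by
        rw [← hΦ.measure_preimage_equiv, preimage_image_eq _ Φ.injective]
    _ ≤ ∏ i, ediam (Function.eval i '' (Φ '' s)) := Real.volume_pi_le_prod_diam _
    _ = ∏ i, ediam ((fun x => inner ℝ (b i) x) '' s) := by simp only [hcoord]

/- A shell of thickness `h` over a small piece `s` of the sphere fits into a box with one side of
length about `h`, in the direction of a point of `s`, and all others about `ediam s`. -/
lemma toSphere_le_of_ediam_le {h : ℝ} (hh : h ∈ Ioc 0 1) {s : Set (sphere (0 : E) 1)}
    (hs : ediam s ≤ ENNReal.ofReal h) :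
    (volume : Measure E).toSphere s ≤
      ENNReal.ofReal (1 + 2 * h) ^ finrank ℝ E * ediam s ^ (finrank ℝ E - 1) := by
  rcases s.eq_empty_or_nonempty with rfl | ⟨e, hes⟩
  · simp
  wlog hclosed : IsClosed s generalizing s
  · refine (measure_mono subset_closure).trans ?_
    rw [← ediam_closure] at hs ⊢
    exact this hs (subset_closure hes) isClosed_closure
  have : Nontrivial E := ⟨⟨e, 0, ne_of_apply_ne Norm.norm (by simp)⟩⟩
  obtain ⟨b, i, hbi⟩ := exists_orthonormalBasis_apply_eq (e := (e : E)) (by simp)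
  set A := Ioo 1 (1 + h) • (Subtype.val '' s)
  have hvol : volume A ≤ ENNReal.ofReal (h + h ^ 2 / 2) *
      (ENNReal.ofReal (1 + 2 * h) * ediam s) ^ (finrank ℝ E - 1) := by
    refine (volume_le_prod_ediam_image_inner b A).trans ?_
    rw [← Finset.mul_prod_erase _ _ (Finset.mem_univ i), hbi]
    refine mul_le_mul' (ediam_inner_image_Ioo_smul_le hes hh.2 hs) ?_
    refine (Finset.prod_le_pow_card _ _ (ENNReal.ofReal (1 + 2 * h) * ediam s)
      fun j hj => ?_).trans_eq ?_
    · exact ediam_inner_image_Ioo_smul_le_of_inner_eq_zero hes (b.norm_eq_one j)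
        (hbi ▸ b.orthonormal.2 (Finset.ne_of_mem_erase hj))
    · simp
  have hh0 : 0 < h := hh.1
  have hh0' : ENNReal.ofReal h ≠ 0 := by simpa using hh0
  refine (ENNReal.mul_le_mul_iff_left hh0' ENNReal.ofReal_ne_top).1 ?_
  calc (volume : Measure E).toSphere s * ENNReal.ofReal h ≤ volume A :=
        toSphere_mul_ofReal_le_addHaar_Ioo_smul_sphere volume h hclosed.measurableSet
    _ ≤ ENNReal.ofReal ((1 + 2 * h) * h) *
          (ENNReal.ofReal (1 + 2 * h) * ediam s) ^ (finrank ℝ E - 1) := by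
        refine hvol.trans ?_
        gcongr
        nlinarith [hh.2]
    _ = ENNReal.ofReal (1 + 2 * h) ^ finrank ℝ E * ediam s ^ (finrank ℝ E - 1) *
          ENNReal.ofReal h := by
        rw [← Nat.sub_add_cancel (finrank_pos (R := ℝ) (M := E)), add_tsub_cancel_right,
          ENNReal.ofReal_mul (by positivity)]
        ring

lemma toSphere_volume_le_hausdorffMeasure :
    (volume : Measure E).toSphere ≤ μH[((finrank ℝ E - 1 : ℕ) : ℝ)] := by
  have hfactor (h : ℝ) (hh : h ∈ Ioc 0 1) : (ENNReal.ofReal (1 + 2 * h) ^ finrank ℝ E)⁻¹ •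
      (volume : Measure E).toSphere ≤ μH[((finrank ℝ E - 1 : ℕ) : ℝ)] := by
    refine Measure.le_hausdorffMeasure _ _ (ENNReal.ofReal h) (by simpa using hh.1) fun s hs => ?_
    have h0 : ENNReal.ofReal (1 + 2 * h) ≠ 0 :=
      (ENNReal.ofReal_pos.2 (by linarith [hh.1])).ne'
    rw [Measure.smul_apply, smul_eq_mul, ENNReal.rpow_natCast,
      ENNReal.inv_mul_le_iff (pow_ne_zero _ h0) (by finiteness)]
    exact toSphere_le_of_ediam_le hh hs
  refine Measure.le_iff'.2 fun s => ?_
  have hlim : Tendsto (fun h : ℝ => ((ENNReal.ofReal (1 + 2 * h) ^ finrank ℝ E)⁻¹ •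
      (volume : Measure E).toSphere) s) (𝓝[>] 0) (𝓝 ((volume : Measure E).toSphere s)) := by
    have hcont : Continuous fun h : ℝ => (ENNReal.ofReal (1 + 2 * h) ^ finrank ℝ E)⁻¹ :=
      ((ENNReal.continuous_pow _).comp (ENNReal.continuous_ofReal.comp (by fun_prop))).inv
    have := ENNReal.Tendsto.mul_const (b := (volume : Measure E).toSphere s)
      (hcont.tendsto 0) (.inl (by simp))
    simpa using this.mono_left nhdsWithin_le_nhds
  refine le_of_tendsto hlim ?_
  filter_upwards [Ioc_mem_nhdsGT one_pos] with h hh using hfactor h hh s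

end InnerProductSpace

section PolarCoordinates

lemma integrable_volumeIoiPow_iff {k : ℕ} {f : ℝ → ℝ} :
    Integrable (fun r : Ioi (0 : ℝ) => f r) (Measure.volumeIoiPow k) ↔
      IntegrableOn (fun r => r ^ k * f r) (Ioi 0) := by
  rw [integrableOn_iff_comap_subtypeVal measurableSet_Ioi, Measure.volumeIoiPow,
    integrable_withDensity_iff_integrable_smul' (by fun_prop) (by simp)]
  refine integrable_congr (.of_forall ?_)
  rintro ⟨r, hr : 0 < r⟩
  simp [ENNReal.toReal_ofReal (pow_nonneg hr.le k)]

lemma integral_volumeIoiPow (k : ℕ) (f : ℝ → ℝ) :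
    ∫ r : Ioi (0 : ℝ), f r ∂(Measure.volumeIoiPow k) = ∫ r in Ioi 0, r ^ k * f r := by
  rw [Measure.volumeIoiPow, integral_withDensity_eq_integral_toReal_smul (by fun_prop) (by simp),
    ← integral_subtype_comap measurableSet_Ioi fun r => r ^ k * f r]
  refine integral_congr_ae (.of_forall ?_)
  rintro ⟨r, hr : 0 < r⟩
  simp [ENNReal.toReal_ofReal (pow_nonneg hr.le k)]

variable {E : Type*} [NormedAddCommGroup E] [MeasurableSpace E] [BorelSpace E]

section NormedSpace

variable [NormedSpace ℝ E]

lemma hausdorffMeasure_restrict_sphere {d r : ℝ} (hd : 0 ≤ d) (hr : 0 < r) :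
    (μH[d] : Measure E).restrict (sphere 0 r) =
      ENNReal.ofReal (r ^ d) • Measure.map (fun ω : sphere (0 : E) 1 => r • ω.1) μH[d] := by
  ext s hs
  have hmeas : Measurable fun ω : sphere (0 : E) 1 => r • ω.1 :=
    (continuous_const_smul r |>.comp continuous_subtype_val).measurable
  have himage : s ∩ sphere 0 r =
      r • (Subtype.val '' ((fun ω : sphere (0 : E) 1 => r • ω.1) ⁻¹' s)) := by
    ext x
    constructor
    · rintro ⟨hxs, hx⟩
      have hx' : ‖x‖ = r := by simpa using hx
      refine ⟨r⁻¹ • x, ⟨⟨r⁻¹ • x, ?_⟩, ?_, rfl⟩, ?_⟩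
      · simp [norm_smul, hx', abs_of_pos hr, hr.ne']
      · simpa [smul_smul, hr.ne'] using hxs
      · simp [smul_smul, hr.ne']
    · rintro ⟨_, ⟨ω, hω, rfl⟩, rfl⟩
      exact ⟨hω, by simp [norm_smul, abs_of_pos hr]⟩
  rw [Measure.restrict_apply hs, Measure.smul_apply, Measure.map_apply hmeas hs, himage,
    Measure.hausdorffMeasure_smul₀ hd hr.ne', ENNReal.smul_def, smul_eq_mul, smul_eq_mul,
    isometry_subtype_coe.hausdorffMeasure_image (.inl hd), ENNReal.coe_rpow_of_nonneg _ hd,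
    ← ENNReal.ofReal_rpow_of_nonneg hr.le hd]
  congr 2
  exact Real.enorm_of_nonneg hr.le

lemma setIntegral_sphere_hausdorffMeasure {d r : ℝ} (hd : 0 ≤ d) (hr : 0 < r) (u : E → ℝ) :
    ∫ x in sphere (0 : E) r, u x ∂μH[d] =
      r ^ d * ∫ ω : sphere (0 : E) 1, u (r • ω.1) ∂μH[d] := by
  have hemb : MeasurableEmbedding fun ω : sphere (0 : E) 1 => r • ω.1 :=
    (Homeomorph.smulOfNeZero r hr.ne').measurableEmbedding.comp
      (MeasurableEmbedding.subtype_coe isClosed_sphere.measurableSet)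
  rw [hausdorffMeasure_restrict_sphere hd hr, integral_smul_measure, hemb.integral_map,
    ENNReal.toReal_ofReal (by positivity), smul_eq_mul]

/-- The integral of `u` over the sphere of radius `r` centred at the origin, with respect to the
`(dim E - 1)`-dimensional Hausdorff measure. Mathlib's `μH` carries no normalising constant, so it
is a multiple of the surface measure. -/
def sphereIntegral (u : E → ℝ) (r : ℝ) : ℝ :=
  ∫ x in sphere (0 : E) r, u x ∂μH[(finrank ℝ E : ℝ) - 1]

lemma sphereIntegral_nonneg {u : E → ℝ} (hu : ∀ x, 0 ≤ u x) (r : ℝ) : 0 ≤ sphereIntegral u r :=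
  integral_nonneg hu

lemma sphereIntegral_mul_comp_norm (u : E → ℝ) (g : ℝ → ℝ) (r : ℝ) :
    sphereIntegral (fun x => u x * g ‖x‖) r = sphereIntegral u r * g r := by
  rw [sphereIntegral, sphereIntegral, ← integral_mul_const]
  exact setIntegral_congr_fun isClosed_sphere.measurableSet fun x hx => by
    simp only [mem_sphere_zero_iff_norm.1 hx]

variable [FiniteDimensional ℝ E] {u : E → ℝ}

lemma integrable_polarCoord {μ : Measure E} [μ.IsAddHaarMeasure] (hu : Integrable u μ) :
    Integrable (fun p : sphere (0 : E) 1 × Ioi (0 : ℝ) => u (p.2.1 • p.1.1))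
      (μ.toSphere.prod (Measure.volumeIoiPow (finrank ℝ E - 1))) := by
  rw [← μ.measurePreserving_homeomorphUnitSphereProd.integrable_comp_emb
    (Homeomorph.measurableEmbedding _)]
  refine ((integrableOn_iff_comap_subtypeVal (measurableSet_singleton _).compl).1
    (hu.integrableOn (s := {0}ᶜ))).congr (.of_forall fun x => ?_)
  have : ‖x.1‖ ≠ 0 := norm_ne_zero_iff.2 x.2
  simp [smul_smul, this]

lemma integral_polarCoord [Nontrivial E] (μ : Measure E) [μ.IsAddHaarMeasure] (u : E → ℝ) :
    ∫ x, u x ∂μ = ∫ p : sphere (0 : E) 1 × Ioi (0 : ℝ), u (p.2.1 • p.1.1)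
      ∂(μ.toSphere.prod (Measure.volumeIoiPow (finrank ℝ E - 1))) := by
  have hpunctured : ∫ x, u x ∂μ = ∫ x : ({0}ᶜ : Set E), u x ∂(μ.comap Subtype.val) := by
    rw [integral_subtype_comap (measurableSet_singleton _).compl u, restrict_compl_singleton]
  rw [hpunctured, ← μ.measurePreserving_homeomorphUnitSphereProd.integral_comp
    (Homeomorph.measurableEmbedding _)]
  refine integral_congr_ae (.of_forall fun x => ?_)
  have : ‖x.1‖ ≠ 0 := norm_ne_zero_iff.2 x.2
  simp [smul_smul, this]

lemma isFiniteMeasure_hausdorffMeasure_sphere :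
    IsFiniteMeasure (μH[((finrank ℝ E - 1 : ℕ) : ℝ)] : Measure (sphere (0 : E) 1)) := by
  obtain ⟨C, hC⟩ := exists_hausdorffMeasure_sphere_le_smul_toSphere (Measure.addHaar (G := E))
  exact isFiniteMeasure_of_le _ hC

lemma integrable_polarCoord_hausdorffMeasure {μ : Measure E} [μ.IsAddHaarMeasure]
    (hu : Integrable u μ) :
    Integrable (fun p : sphere (0 : E) 1 × Ioi (0 : ℝ) => u (p.2.1 • p.1.1))
      ((μH[((finrank ℝ E - 1 : ℕ) : ℝ)]).prod (Measure.volumeIoiPow (finrank ℝ E - 1))) := by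
  obtain ⟨C, hC⟩ := exists_hausdorffMeasure_sphere_le_smul_toSphere μ
  have hle := Measure.prod_mono hC (le_refl (Measure.volumeIoiPow (finrank ℝ E - 1)))
  rw [Measure.prod_smul_left] at hle
  exact (integrable_polarCoord hu).smul_measure_nnreal.mono_measure hle

lemma sphereIntegral_eq [Nontrivial E] {r : ℝ} (hr : 0 < r) (u : E → ℝ) :
    sphereIntegral u r = r ^ (finrank ℝ E - 1) *
      ∫ ω : sphere (0 : E) 1, u (r • ω.1) ∂μH[((finrank ℝ E - 1 : ℕ) : ℝ)] := by
  rw [sphereIntegral, ← Nat.cast_pred finrank_pos,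
    setIntegral_sphere_hausdorffMeasure (Nat.cast_nonneg _) hr, Real.rpow_natCast]

lemma integrableOn_sphereIntegral [Nontrivial E] {μ : Measure E} [μ.IsAddHaarMeasure]
    (hu : Integrable u μ) : IntegrableOn (sphereIntegral u) (Ioi 0) := by
  have := isFiniteMeasure_hausdorffMeasure_sphere (E := E)
  have hradial := (integrable_volumeIoiPow_iff (f := fun r =>
    ∫ ω : sphere (0 : E) 1, u (r • ω.1) ∂μH[((finrank ℝ E - 1 : ℕ) : ℝ)])).1
    (integrable_polarCoord_hausdorffMeasure hu).integral_prod_right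
  exact hradial.congr_fun (fun r hr => (sphereIntegral_eq hr u).symm) measurableSet_Ioi

lemma integrableOn_sphereIntegral_Ioo [Nontrivial E] {μ : Measure E} [μ.IsAddHaarMeasure] {R : ℝ}
    (hu : IntegrableOn u (ball 0 R) μ) : IntegrableOn (sphereIntegral u) (Ioo 0 R) := by
  refine ((integrableOn_sphereIntegral (hu.integrable_indicator measurableSet_ball)).mono_set
    Ioo_subset_Ioi_self).congr_fun (fun r hr => ?_) measurableSet_Ioo
  exact setIntegral_congr_fun isClosed_sphere.measurableSet fun x hx =>
    indicator_of_mem (sphere_subset_ball hr.2 hx) u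

end NormedSpace

variable [InnerProductSpace ℝ E] [FiniteDimensional ℝ E] [Nontrivial E] {u : E → ℝ}

lemma integral_le_integral_sphereIntegral (hu : Integrable u) (hu0 : ∀ x, 0 ≤ u x) :
    ∫ x, u x ≤ ∫ r in Ioi 0, sphereIntegral u r := by
  have := isFiniteMeasure_hausdorffMeasure_sphere (E := E)
  have hint := integrable_polarCoord_hausdorffMeasure hu
  calc ∫ x, u x ≤ ∫ p : sphere (0 : E) 1 × Ioi (0 : ℝ), u (p.2.1 • p.1.1)
        ∂((μH[((finrank ℝ E - 1 : ℕ) : ℝ)] : Measure (sphere (0 : E) 1)).prod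
          (Measure.volumeIoiPow (finrank ℝ E - 1))) := by
        rw [integral_polarCoord volume u]
        exact integral_mono_measure (Measure.prod_mono toSphere_volume_le_hausdorffMeasure le_rfl)
          (.of_forall fun p => hu0 _) hint
    _ = ∫ r in Ioi (0 : ℝ), r ^ (finrank ℝ E - 1) *
          ∫ ω : sphere (0 : E) 1, u (r • ω.1) ∂μH[((finrank ℝ E - 1 : ℕ) : ℝ)] := by
        rw [integral_prod_symm _ hint, integral_volumeIoiPow _ fun r =>
          ∫ ω : sphere (0 : E) 1, u (r • ω.1) ∂μH[((finrank ℝ E - 1 : ℕ) : ℝ)]]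
    _ = ∫ r in Ioi 0, sphereIntegral u r :=
        setIntegral_congr_fun measurableSet_Ioi fun r hr => (sphereIntegral_eq hr u).symm

end PolarCoordinates

end SphereMeasure

section OptimalWeight

open Filter

variable {α : Type*} {mα : MeasurableSpace α} {μ : Measure α} {s δ : ℝ} {H : α → ℝ}

lemma integral_rpow_mul_rpow_le {f g : α → ℝ} (hf : Integrable f μ) (hg : Integrable g μ)
    (hf0 : ∀ x, 0 ≤ f x) (hg0 : ∀ x, 0 ≤ g x) {p q : ℝ} (hp : 0 ≤ p) (hq : 0 ≤ q)
    (hpq : p + q = 1) :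
    ∫ x, f x ^ p * g x ^ q ∂μ ≤ (∫ x, f x ∂μ) ^ p * (∫ x, g x ∂μ) ^ q := by
  have hfI : 0 ≤ ∫ x, f x ∂μ := integral_nonneg hf0
  have hgI : 0 ≤ ∫ x, g x ∂μ := integral_nonneg hg0
  rw [integral_eq_lintegral_of_nonneg_ae
    (.of_forall fun x => mul_nonneg (Real.rpow_nonneg (hf0 x) p) (Real.rpow_nonneg (hg0 x) q))
    ((hf.aemeasurable.pow_const p).mul (hg.aemeasurable.pow_const q)).aestronglyMeasurable]
  refine ENNReal.toReal_le_of_le_ofReal (by positivity) ?_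
  rw [ENNReal.ofReal_mul (by positivity), ← ENNReal.ofReal_rpow_of_nonneg hfI hp,
    ← ENNReal.ofReal_rpow_of_nonneg hgI hq,
    ofReal_integral_eq_lintegral_ofReal hf (.of_forall hf0),
    ofReal_integral_eq_lintegral_ofReal hg (.of_forall hg0)]
  refine (lintegral_congr fun x => ?_).trans_le (ENNReal.lintegral_mul_norm_pow_le
    hf.aemeasurable.ennreal_ofReal hg.aemeasurable.ennreal_ofReal hp hq hpq)
  rw [ENNReal.ofReal_mul (Real.rpow_nonneg (hf0 x) p),
    ENNReal.ofReal_rpow_of_nonneg (hf0 x) hp, ENNReal.ofReal_rpow_of_nonneg (hg0 x) hq]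

lemma measureReal_univ_rpow_le (hH : ∀ x, 0 < H x) {q : ℝ} (hq : 0 < q)
    (hδ : 0 < δ) (hHq : Integrable (fun x => H x ^ (-q)) μ)
    (hHδ : Integrable (fun x => H x ^ δ) μ) :
    μ.real univ ^ (q⁻¹ + δ⁻¹) ≤
      (∫ x, H x ^ (-q) ∂μ) ^ q⁻¹ * (∫ x, H x ^ δ ∂μ) ^ δ⁻¹ := by
  have hpow0 (t : ℝ) (x : α) : 0 ≤ H x ^ t := Real.rpow_nonneg (hH x).le t
  have hA : 0 ≤ ∫ x, H x ^ (-q) ∂μ := integral_nonneg (hpow0 (-q))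
  have hB : 0 ≤ ∫ x, H x ^ δ ∂μ := integral_nonneg (hpow0 δ)
  have hone (x : α) : (H x ^ (-q)) ^ (δ / (q + δ)) * (H x ^ δ) ^ (q / (q + δ)) = 1 := by
    rw [← Real.rpow_mul (hH x).le, ← Real.rpow_mul (hH x).le, ← Real.rpow_add (hH x),
      ← Real.rpow_zero (H x)]
    ring_nf
  have hholder := integral_rpow_mul_rpow_le hHq hHδ (hpow0 _) (hpow0 _)
    (p := δ / (q + δ)) (q := q / (q + δ)) (by positivity) (by positivity) (by field_simp; ring)
  simp only [hone, integral_const, smul_eq_mul, mul_one] at hholder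
  calc μ.real univ ^ (q⁻¹ + δ⁻¹)
      ≤ ((∫ x, H x ^ (-q) ∂μ) ^ (δ / (q + δ)) * (∫ x, H x ^ δ ∂μ) ^ (q / (q + δ))) ^
          (q⁻¹ + δ⁻¹) := by gcongr
    _ = (∫ x, H x ^ (-q) ∂μ) ^ q⁻¹ * (∫ x, H x ^ δ ∂μ) ^ δ⁻¹ := by
        rw [Real.mul_rpow (by positivity) (by positivity), ← Real.rpow_mul hA,
          ← Real.rpow_mul hB]
        congr 2 <;> field_simp <;> ring

lemma integral_rpow_pos [NeZero μ] (hH : ∀ x, 0 < H x) {p : ℝ}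
    (hHp : Integrable (fun x => H x ^ p) μ) : 0 < ∫ x, H x ^ p ∂μ := by
  have hpos (x : α) : 0 < H x ^ p := Real.rpow_pos_of_pos (hH x) p
  rw [integral_pos_iff_support_of_nonneg (fun x => (hpos x).le) hHp,
    Function.support_eq_univ fun x => (hpos x).ne']
  exact Measure.measure_univ_pos.2 (NeZero.ne μ)

lemma integrable_rpow_neg [IsFiniteMeasure μ] {ε : ℝ} (hε : 0 < ε) (hHε : ∀ x, ε ≤ H x)
    (hH : AEMeasurable H μ) {q : ℝ} (hq : 0 ≤ q) : Integrable (fun x => H x ^ (-q)) μ := by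
  refine .of_bound (hH.pow_const _).aestronglyMeasurable (ε ^ (-q)) (.of_forall fun x => ?_)
  rw [Real.norm_of_nonneg (Real.rpow_nonneg (hε.le.trans (hHε x)) _)]
  exact Real.rpow_le_rpow_of_nonpos hε (hHε x) (neg_nonpos.2 hq)

/-- The minimiser of `∫ H * w ^ s` among the weights `w` with `∫ w = 1`, given by the
Euler-Lagrange equation `H * w ^ (s - 1) = const`. -/
def optimalWeight (μ : Measure α) (s : ℝ) (H : α → ℝ) (x : α) : ℝ :=
  H x ^ (-(s - 1)⁻¹) / ∫ y, H y ^ (-(s - 1)⁻¹) ∂μ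

lemma integral_optimalWeight (hH : ∫ x, H x ^ (-(s - 1)⁻¹) ∂μ ≠ 0) :
    ∫ x, optimalWeight μ s H x ∂μ = 1 := by
  simp only [optimalWeight, integral_div, div_self hH]

lemma optimalWeight_nonneg (hH : ∀ x, 0 ≤ H x) (x : α) : 0 ≤ optimalWeight μ s H x :=
  div_nonneg (Real.rpow_nonneg (hH x) _) (integral_nonneg fun y => Real.rpow_nonneg (hH y) _)

lemma optimalWeight_le {ε : ℝ} (hε : 0 < ε) (hs : 1 < s) (hH : ∀ x, ε ≤ H x) (x : α) :
    optimalWeight μ s H x ≤ ε ^ (-(s - 1)⁻¹) / ∫ y, H y ^ (-(s - 1)⁻¹) ∂μ := by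
  have hA : 0 ≤ ∫ y, H y ^ (-(s - 1)⁻¹) ∂μ :=
    integral_nonneg fun y => Real.rpow_nonneg (hε.le.trans (hH y)) _
  have hq : 0 < (s - 1)⁻¹ := inv_pos.2 (sub_pos.2 hs)
  exact div_le_div_of_nonneg_right
    (Real.rpow_le_rpow_of_nonpos hε (hH x) (neg_nonpos.2 hq.le)) hA

lemma mul_optimalWeight_rpow (hs : 1 < s) (hH : ∀ x, 0 < H x) (x : α) :
    H x * optimalWeight μ s H x ^ s =
      (∫ y, H y ^ (-(s - 1)⁻¹) ∂μ) ^ (-s) * H x ^ (-(s - 1)⁻¹) := by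
  have hs1 : s - 1 ≠ 0 := (sub_pos.2 hs).ne'
  have hA : 0 ≤ ∫ y, H y ^ (-(s - 1)⁻¹) ∂μ :=
    integral_nonneg fun y => Real.rpow_nonneg (hH y).le _
  have hexp : H x * (H x ^ (-(s - 1)⁻¹)) ^ s = H x ^ (-(s - 1)⁻¹) := by
    rw [← Real.rpow_mul (hH x).le, mul_comm, ← Real.rpow_add_one (hH x).ne']
    congr 1
    field_simp
    ring
  rw [optimalWeight, Real.div_rpow (Real.rpow_nonneg (hH x).le _) hA, ← mul_div_assoc, hexp,
    Real.rpow_neg hA, div_eq_inv_mul]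

lemma integral_mul_optimalWeight_rpow_le [IsFiniteMeasure μ] [NeZero μ] (hs : 1 < s)
    (hδ : 0 < δ) (hH : ∀ x, 0 < H x) (hHs : Integrable (fun x => H x ^ (-(s - 1)⁻¹)) μ)
    (hHδ : Integrable (fun x => H x ^ δ) μ) :
    ∫ x, H x * optimalWeight μ s H x ^ s ∂μ ≤
      μ.real univ ^ (-(s - 1 + 1 / δ)) * (∫ x, H x ^ δ ∂μ) ^ (1 / δ) := by
  have hA : 0 < ∫ x, H x ^ (-(s - 1)⁻¹) ∂μ := integral_rpow_pos hH hHs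
  have hm : 0 < μ.real univ := measureReal_univ_pos
  have hholder := measureReal_univ_rpow_le hH (inv_pos.2 (sub_pos.2 hs)) hδ hHs hHδ
  rw [inv_inv] at hholder
  simp only [mul_optimalWeight_rpow hs hH, integral_const_mul, one_div]
  rw [← Real.rpow_add_one hA.ne', show -s + 1 = -(s - 1) by ring, Real.rpow_neg hA.le,
    Real.rpow_neg hm.le, inv_mul_eq_div, inv_eq_one_div, div_le_div_iff₀ (by positivity)
      (by positivity), one_mul, mul_comm]
  exact hholder

lemma integrable_add_const_rpow [IsFiniteMeasure μ] {f : α → ℝ} (hf0 : ∀ x, 0 ≤ f x)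
    (hf : AEMeasurable f μ) (hδ : 0 < δ) (hfδ : Integrable (fun x => f x ^ δ) μ) {ε : ℝ}
    (hε : 0 ≤ ε) : Integrable (fun x => (f x + ε) ^ δ) μ := by
  refine Integrable.mono' ((hfδ.add (integrable_const (ε ^ δ))).const_mul (2 ^ δ))
    ((hf.add_const ε).pow_const δ).aestronglyMeasurable (.of_forall fun x => ?_)
  have hx := hf0 x
  rw [Real.norm_of_nonneg (by positivity)]
  calc (f x + ε) ^ δ ≤ (2 * max (f x) ε) ^ δ := by
        gcongr
        linarith [le_max_left (f x) ε, le_max_right (f x) ε]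
    _ = 2 ^ δ * max (f x ^ δ) (ε ^ δ) := by
        rw [Real.mul_rpow two_pos.le (by positivity),
          (Real.monotoneOn_rpow_Ici_of_exponent_nonneg hδ.le).map_max hx hε]
    _ ≤ 2 ^ δ * (f x ^ δ + ε ^ δ) := by
        gcongr
        exact max_le_add_of_nonneg (by positivity) (by positivity)

lemma tendsto_integral_add_const_rpow [IsFiniteMeasure μ] {f : α → ℝ} (hf0 : ∀ x, 0 ≤ f x)
    (hf : AEMeasurable f μ) (hδ : 0 < δ) (hfδ : Integrable (fun x => f x ^ δ) μ) :
    Tendsto (fun ε : ℝ => ∫ x, (f x + ε) ^ δ ∂μ) (𝓝[>] 0) (𝓝 (∫ x, f x ^ δ ∂μ)) := by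
  refine tendsto_integral_filter_of_dominated_convergence (fun x => (f x + 1) ^ δ)
    (.of_forall fun ε => ((hf.add_const ε).pow_const δ).aestronglyMeasurable) ?_
    (integrable_add_const_rpow hf0 hf hδ hfδ zero_le_one) (.of_forall fun x => ?_)
  · filter_upwards [Ioo_mem_nhdsGT (zero_lt_one' ℝ)] with ε hε
    refine .of_forall fun x => ?_
    have hx : 0 ≤ f x + ε := add_nonneg (hf0 x) hε.1.le
    rw [Real.norm_of_nonneg (by positivity)]
    exact Real.rpow_le_rpow hx (by linarith [hε.2]) hδ.le
  · have hcont : Continuous fun ε : ℝ => (f x + ε) ^ δ :=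
      (continuous_const.add continuous_id).rpow_const fun _ => .inr hδ.le
    simpa using (hcont.tendsto 0).mono_left nhdsWithin_le_nhds

lemma exists_bounded_weight_integral_mul_rpow_lt [IsFiniteMeasure μ] [NeZero μ] {f : α → ℝ}
    (hf0 : ∀ x, 0 ≤ f x) (hf : AEMeasurable f μ) (hs : 1 < s) (hδ : 0 < δ)
    (hfδ : Integrable (fun x => f x ^ δ) μ) {κ : ℝ}
    (hκ : μ.real univ ^ (-(s - 1 + 1 / δ)) * (∫ x, f x ^ δ ∂μ) ^ (1 / δ) < κ) :
    ∃ (w : α → ℝ) (K : ℝ), AEMeasurable w μ ∧ (∀ x, w x ∈ Icc 0 K) ∧ ∫ x, w x ∂μ = 1 ∧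
      ∫ x, f x * w x ^ s ∂μ < κ := by
  have hlim : Tendsto (fun ε : ℝ => μ.real univ ^ (-(s - 1 + 1 / δ)) *
      (∫ x, (f x + ε) ^ δ ∂μ) ^ (1 / δ)) (𝓝[>] 0)
      (𝓝 (μ.real univ ^ (-(s - 1 + 1 / δ)) * (∫ x, f x ^ δ ∂μ) ^ (1 / δ))) :=
    ((tendsto_integral_add_const_rpow hf0 hf hδ hfδ).rpow_const
      (.inr (one_div_pos.2 hδ).le)).const_mul _
  -- The optimal weight of `f` itself may be unbounded, that of `f + ε` is bounded.
  obtain ⟨ε, hεκ, hε : 0 < ε⟩ := ((hlim.eventually_lt_const hκ).and self_mem_nhdsWithin).exists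
  have hHε (x : α) : ε ≤ f x + ε := le_add_of_nonneg_left (hf0 x)
  have hH (x : α) : 0 < f x + ε := hε.trans_le (hHε x)
  have hHs := integrable_rpow_neg hε hHε (hf.add_const ε) (inv_pos.2 (sub_pos.2 hs)).le
  refine ⟨optimalWeight μ s fun x => f x + ε, _,
    ((hf.add_const ε).pow_const _).div_const _,
    fun x => ⟨optimalWeight_nonneg (fun x => (hH x).le) x, optimalWeight_le hε hs hHε x⟩,
    integral_optimalWeight (integral_rpow_pos hH hHs).ne', lt_of_le_of_lt ?_ hεκ⟩
  refine (integral_mono_of_nonneg ?_ ?_ ?_).trans (integral_mul_optimalWeight_rpow_le hs hδ hH hHs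
    (integrable_add_const_rpow hf0 hf hδ hfδ hε.le))
  · exact .of_forall fun x =>
      mul_nonneg (hf0 x) (Real.rpow_nonneg (optimalWeight_nonneg (fun x => (hH x).le) x) s)
  · simp only [mul_optimalWeight_rpow hs hH]
    exact hHs.const_mul _
  · exact .of_forall fun x => mul_le_mul_of_nonneg_right (le_add_of_nonneg_right hε.le)
      (Real.rpow_nonneg (optimalWeight_nonneg (fun x => (hH x).le) x) s)

end OptimalWeight

section ContinuousApproximation

open Filter

variable {X : Type*} [PseudoMetricSpace X]

lemma exists_seq_tendsto_indicator_of_isCompact_closure {U : Set X} (hU : IsOpen U)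
    (hUc : IsCompact (closure U)) :
    ∃ χ : ℕ → X → ℝ, (∀ n, Continuous (χ n)) ∧ (∀ n, tsupport (χ n) ⊆ U) ∧
      (∀ n x, χ n x ∈ Icc 0 1) ∧ ∀ x ∈ U, Tendsto (fun n => χ n x) atTop (𝓝 1) := by
  obtain ⟨F, hFc, hFU, hFun, hFmono⟩ := hU.exists_iUnion_isClosed
  choose χ hχU hχF hχ01 using fun n => exists_tsupport_one_of_isOpen_isClosed hU hUc (hFc n) (hFU n)
  refine ⟨fun n => χ n, fun n => (χ n).continuous, hχU, hχ01, fun x hx => ?_⟩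
  obtain ⟨m, hm⟩ := mem_iUnion.1 (hFun.symm ▸ hx)
  refine tendsto_const_nhds.congr' ?_
  filter_upwards [eventually_ge_atTop m] with n hn
  exact (hχF n (hFmono hn hm)).symm

variable [MeasurableSpace X] [BorelSpace X] {μ : Measure X} {w : X → ℝ} {K : ℝ}

lemma exists_seq_continuous_tendsto_ae [IsFiniteMeasure μ] (hw : AEMeasurable w μ)
    (hwK : ∀ x, w x ∈ Icc 0 K) :
    ∃ φ : ℕ → X → ℝ, (∀ n, Continuous (φ n)) ∧ (∀ n x, φ n x ∈ Icc 0 K) ∧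
      ∀ᵐ x ∂μ, Tendsto (fun n => φ n x) atTop (𝓝 (w x)) := by
  have hwint : MemLp w 1 μ := .of_bound hw.aestronglyMeasurable K
    (.of_forall fun x => by rw [Real.norm_of_nonneg (hwK x).1]; exact (hwK x).2)
  choose g hg hgL using fun n =>
    hwint.exists_boundedContinuous_eLpNorm_sub_le ENNReal.one_ne_top
      (ENNReal.inv_ne_zero.2 (ENNReal.natCast_ne_top n))
  have hmeas : TendstoInMeasure μ (fun n => g n) atTop w := by
    refine tendstoInMeasure_of_tendsto_eLpNorm one_ne_zero (fun n => (hgL n).1) hwint.1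
      (tendsto_of_tendsto_of_tendsto_of_le_of_le tendsto_const_nhds
        ENNReal.tendsto_inv_nat_nhds_zero (fun _ => zero_le) fun n => ?_)
    rw [eLpNorm_sub_comm]
    exact hg n
  obtain ⟨ns, -, hns⟩ := hmeas.exists_seq_tendsto_ae
  refine ⟨fun n x => max 0 (min (g (ns n) x) K), fun n => by fun_prop, fun n x =>
    ⟨le_max_left _ _, max_le ((hwK x).1.trans (hwK x).2) (min_le_right _ _)⟩, ?_⟩
  filter_upwards [hns] with x hx
  have hclamp : Tendsto (fun n => max 0 (min (g (ns n) x) K)) atTop (𝓝 (max 0 (min (w x) K))) :=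
    tendsto_const_nhds.max (hx.min tendsto_const_nhds)
  rwa [min_eq_left (hwK x).2, max_eq_right (hwK x).1] at hclamp

lemma exists_seq_continuous_tsupport_subset_tendsto_ae {U : Set X} (hU : IsOpen U)
    (hUc : IsCompact (closure U)) [IsFiniteMeasure (μ.restrict U)]
    (hw : AEMeasurable w (μ.restrict U)) (hwK : ∀ x, w x ∈ Icc 0 K) :
    ∃ φ : ℕ → X → ℝ, (∀ n, Continuous (φ n)) ∧ (∀ n, tsupport (φ n) ⊆ U) ∧
      (∀ n x, φ n x ∈ Icc 0 K) ∧
      ∀ᵐ x ∂μ.restrict U, Tendsto (fun n => φ n x) atTop (𝓝 (w x)) := by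
  obtain ⟨χ, hχ, hχU, hχ01, hχlim⟩ := exists_seq_tendsto_indicator_of_isCompact_closure hU hUc
  obtain ⟨g, hg, hgK, hglim⟩ := exists_seq_continuous_tendsto_ae hw hwK
  refine ⟨fun n x => χ n x * g n x, fun n => (hχ n).mul (hg n),
    fun n => tsupport_mul_subset_left.trans (hχU n), fun n x =>
      ⟨mul_nonneg (hχ01 n x).1 (hgK n x).1, ?_⟩, ?_⟩
  · exact (mul_le_of_le_one_left (hgK n x).1 (hχ01 n x).2).trans (hgK n x).2
  · filter_upwards [hglim, ae_restrict_mem hU.measurableSet] with x hx hxU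
    simpa using (hχlim x hxU).mul hx

end ContinuousApproximation

section CutoffDensity

open Filter

/-- `ψ` is a probability density on `(ρ, σ)` whose primitive can serve as the radial profile of a
`C¹` cutoff function: it is continuous and its support is a compact subset of `(ρ, σ)`. -/
structure IsCutoffDensity (ρ σ : ℝ) (ψ : ℝ → ℝ) : Prop where
  continuous : Continuous ψ
  nonneg : ∀ r, 0 ≤ ψ r
  tsupport_subset : tsupport ψ ⊆ Ioo ρ σ
  setIntegral_eq_one : ∫ r in Ioo ρ σ, ψ r = 1

variable {ρ σ s δ : ℝ} {f w : ℝ → ℝ} {K : ℝ}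

lemma exists_isCutoffDensity_setIntegral_mul_rpow_lt (hf : IntegrableOn f (Ioo ρ σ))
    (hs : 0 ≤ s) (hw : AEMeasurable w (volume.restrict (Ioo ρ σ))) (hwK : ∀ r, w r ∈ Icc 0 K)
    (hw1 : ∫ r in Ioo ρ σ, w r = 1) {κ : ℝ} (hκ : ∫ r in Ioo ρ σ, f r * w r ^ s < κ) :
    ∃ ψ, IsCutoffDensity ρ σ ψ ∧ ∫ r in Ioo ρ σ, f r * ψ r ^ s < κ := by
  obtain ⟨φ, hφ, hφU, hφK, hφw⟩ := exists_seq_continuous_tsupport_subset_tendsto_ae isOpen_Ioo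
    (isCompact_Icc.closure_of_subset Ioo_subset_Icc_self) hw hwK
  have hmass : Tendsto (fun n => ∫ r in Ioo ρ σ, φ n r) atTop (𝓝 1) := by
    rw [← hw1]
    refine tendsto_integral_of_dominated_convergence (fun _ => K)
      (fun n => (hφ n).aestronglyMeasurable) (integrable_const K) (fun n => .of_forall fun r => ?_)
      hφw
    rw [Real.norm_of_nonneg (hφK n r).1]
    exact (hφK n r).2
  have henergy : Tendsto (fun n => ∫ r in Ioo ρ σ, f r * φ n r ^ s) atTop
      (𝓝 (∫ r in Ioo ρ σ, f r * w r ^ s)) := by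
    refine tendsto_integral_of_dominated_convergence (fun r => ‖f r‖ * K ^ s)
      (fun n => hf.1.mul ((hφ n).rpow_const fun _ => .inr hs).aestronglyMeasurable)
      (hf.norm.mul_const _) (fun n => .of_forall fun r => ?_) ?_
    · rw [norm_mul, Real.norm_of_nonneg (Real.rpow_nonneg (hφK n r).1 s)]
      exact mul_le_mul_of_nonneg_left (Real.rpow_le_rpow (hφK n r).1 (hφK n r).2 hs)
        (norm_nonneg _)
    · filter_upwards [hφw] with r hr
      exact (hr.rpow_const (.inr hs)).const_mul _
  have hnormalized := henergy.div (hmass.rpow_const (p := s) (.inr hs)) (by simp)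
  rw [Real.one_rpow, div_one] at hnormalized
  obtain ⟨n, hn, hmn⟩ := ((hnormalized.eventually_lt_const hκ).and
    (hmass.eventually_const_lt zero_lt_one)).exists
  refine ⟨fun r => φ n r / ∫ t in Ioo ρ σ, φ n t, ⟨(hφ n).div_const _,
    fun r => div_nonneg (hφK n r).1 hmn.le, ?_, ?_⟩, ?_⟩
  · simp only [div_eq_mul_inv]
    exact tsupport_mul_subset_left.trans (hφU n)
  · rw [integral_div, div_self hmn.ne']
  · simp only [Real.div_rpow (hφK n _).1 hmn.le, ← mul_div_assoc, integral_div]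
    exact hn

lemma exists_isCutoffDensity_of_lt (hρσ : ρ < σ) (hf0 : ∀ r, 0 ≤ f r)
    (hf : IntegrableOn f (Ioo ρ σ)) (hs : 1 < s) (hδ : 0 < δ)
    (hfδ : IntegrableOn (fun r => f r ^ δ) (Ioo ρ σ)) {κ : ℝ}
    (hκ : (σ - ρ) ^ (-(s - 1 + 1 / δ)) * (∫ r in Ioo ρ σ, f r ^ δ) ^ (1 / δ) < κ) :
    ∃ ψ, IsCutoffDensity ρ σ ψ ∧ ∫ r in Ioo ρ σ, f r * ψ r ^ s < κ := by
  have : NeZero (volume.restrict (Ioo ρ σ)) := ⟨by simp [Measure.restrict_eq_zero, hρσ]⟩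
  have hmass : (volume.restrict (Ioo ρ σ)).real univ = σ - ρ := by simp [hρσ.le]
  obtain ⟨w, K, hw, hwK, hw1, hwκ⟩ := exists_bounded_weight_integral_mul_rpow_lt hf0
    hf.aemeasurable hs hδ hfδ (by rwa [hmass])
  exact exists_isCutoffDensity_setIntegral_mul_rpow_lt hf (by linarith) hw hwK hw1 hwκ

end CutoffDensity

section RadialCutoff

variable {ρ σ : ℝ} {ψ : ℝ → ℝ}

lemma exists_subset_Icc_of_isCompact_subset_Ioo (hρσ : ρ < σ) {K : Set ℝ}
    (hK : IsCompact K) (hKρσ : K ⊆ Ioo ρ σ) : ∃ a b, ρ < a ∧ b < σ ∧ K ⊆ Icc a b := by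
  obtain rfl | hne := K.eq_empty_or_nonempty
  · exact ⟨σ, ρ, hρσ, hρσ, empty_subset _⟩
  · exact ⟨sInf K, sSup K, (hKρσ (hK.sInf_mem hne)).1, (hKρσ (hK.sSup_mem hne)).2,
      subset_Icc_csInf_csSup hK.bddBelow hK.bddAbove⟩

lemma hasDerivAt_intervalIntegral_left (hψ : Continuous ψ) (r : ℝ) :
    HasDerivAt (fun r => ∫ t in r..σ, ψ t) (-ψ r) r :=
  intervalIntegral.integral_hasDerivAt_left (hψ.intervalIntegrable _ _)
    hψ.aestronglyMeasurable.stronglyMeasurableAtFilter hψ.continuousAt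

lemma contDiff_intervalIntegral_left (hψ : Continuous ψ) :
    ContDiff ℝ 1 fun r => ∫ t in r..σ, ψ t := by
  have hderiv : deriv (fun r => ∫ t in r..σ, ψ t) = -ψ :=
    funext fun r => (hasDerivAt_intervalIntegral_left hψ r).deriv
  exact contDiff_one_iff_deriv.2
    ⟨fun r => (hasDerivAt_intervalIntegral_left hψ r).differentiableAt, hderiv ▸ hψ.neg⟩

/-- The radial function on `E` that vanishes on the sphere of radius `σ` and has radial derivative
`-ψ`. -/
def radialCutoff {E : Type*} [NormedAddCommGroup E] (σ : ℝ) (ψ : ℝ → ℝ) (x : E) : ℝ :=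
  ∫ t in ‖x‖..σ, ψ t

namespace IsCutoffDensity

lemma lt (hψ : IsCutoffDensity ρ σ ψ) : ρ < σ := by
  by_contra! h
  simpa [Ioo_eq_empty_of_le h] using hψ.setIntegral_eq_one

lemma hasCompactSupport (hψ : IsCutoffDensity ρ σ ψ) : HasCompactSupport ψ :=
  isCompact_Icc.of_isClosed_subset (isClosed_tsupport ψ)
    (hψ.tsupport_subset.trans Ioo_subset_Icc_self)

lemma apply_eq_zero (hψ : IsCutoffDensity ρ σ ψ) {r : ℝ} (hr : r ∉ Ioo ρ σ) : ψ r = 0 :=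
  image_eq_zero_of_notMem_tsupport fun h => hr (hψ.tsupport_subset h)

lemma exists_apply_eq_zero (hψ : IsCutoffDensity ρ σ ψ) :
    ∃ a b, ρ < a ∧ b < σ ∧ ∀ r ∉ Icc a b, ψ r = 0 := by
  obtain ⟨a, b, ha, hb, hab⟩ := exists_subset_Icc_of_isCompact_subset_Ioo hψ.lt
    hψ.hasCompactSupport hψ.tsupport_subset
  exact ⟨a, b, ha, hb, fun r hr => image_eq_zero_of_notMem_tsupport fun h => hr (hab h)⟩

lemma intervalIntegral_eq_one (hψ : IsCutoffDensity ρ σ ψ) : ∫ t in ρ..σ, ψ t = 1 := by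
  rw [intervalIntegral.integral_of_le hψ.lt.le, integral_Ioc_eq_integral_Ioo,
    hψ.setIntegral_eq_one]

variable {E : Type*} [NormedAddCommGroup E]

lemma radialCutoff_nonneg (hψ : IsCutoffDensity ρ σ ψ) (x : E) : 0 ≤ radialCutoff σ ψ x := by
  obtain h | h := le_total ‖x‖ σ
  · exact intervalIntegral.integral_nonneg h fun t _ => hψ.nonneg t
  · refine (intervalIntegral.integral_zero_ae (.of_forall fun t ht => hψ.apply_eq_zero ?_)).ge
    rw [uIoc_of_ge h] at ht
    exact fun htσ => htσ.2.not_gt ht.1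

lemma exists_eqOn_one (hψ : IsCutoffDensity ρ σ ψ) :
    ∃ a > ρ, ∀ x ∈ ball (0 : E) a, radialCutoff σ ψ x = 1 := by
  obtain ⟨a, _, ha, -, hab⟩ := hψ.exists_apply_eq_zero
  refine ⟨a, ha, fun x hx => ?_⟩
  have hzero : ∫ t in ‖x‖..ρ, ψ t = 0 := by
    refine intervalIntegral.integral_zero_ae (.of_forall fun t ht => hab t fun h => ?_)
    exact (ht.2.trans_lt (max_lt (mem_ball_zero_iff.1 hx) ha)).not_ge h.1
  rw [radialCutoff, ← intervalIntegral.integral_add_adjacent_intervals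
    (hψ.continuous.intervalIntegrable ‖x‖ ρ) (hψ.continuous.intervalIntegrable ρ σ), hzero,
    zero_add, hψ.intervalIntegral_eq_one]

lemma radialCutoff_eq_one (hψ : IsCutoffDensity ρ σ ψ) {x : E} (hx : x ∈ ball 0 ρ) :
    radialCutoff σ ψ x = 1 := by
  obtain ⟨a, ha, hone⟩ := hψ.exists_eqOn_one (E := E)
  exact hone x (ball_subset_ball ha.le hx)

lemma tsupport_radialCutoff_subset (hψ : IsCutoffDensity ρ σ ψ) :
    tsupport (radialCutoff σ ψ : E → ℝ) ⊆ ball 0 σ := by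
  obtain ⟨_, b, -, hb, hab⟩ := hψ.exists_apply_eq_zero
  refine (closure_minimal (fun x hx => ?_) isClosed_closedBall).trans
    (closedBall_subset_ball (x := (0 : E)) hb)
  by_contra hxb
  refine hx (intervalIntegral.integral_zero_ae (.of_forall fun t ht => hab t fun h => ?_))
  exact (lt_min (by simpa using hxb) hb |>.trans ht.1).not_ge h.2

lemma hasCompactSupport_radialCutoff [ProperSpace E] (hψ : IsCutoffDensity ρ σ ψ) :
    HasCompactSupport (radialCutoff σ ψ : E → ℝ) :=
  (isCompact_closedBall 0 σ).of_isClosed_subset (isClosed_tsupport _)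
    (hψ.tsupport_radialCutoff_subset.trans ball_subset_closedBall)

lemma radialCutoff_eventuallyEq_one (hρ : 0 ≤ ρ) (hψ : IsCutoffDensity ρ σ ψ) :
    (radialCutoff σ ψ : E → ℝ) =ᶠ[𝓝 0] fun _ => 1 := by
  obtain ⟨a, ha, hone⟩ := hψ.exists_eqOn_one (E := E)
  exact Filter.eventually_of_mem (ball_mem_nhds 0 (hρ.trans_lt ha)) hone

variable [InnerProductSpace ℝ E]

lemma contDiff_radialCutoff (hρ : 0 ≤ ρ) (hψ : IsCutoffDensity ρ σ ψ) :
    ContDiff ℝ 1 (radialCutoff σ ψ : E → ℝ) := by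
  refine contDiff_iff_contDiffAt.2 fun x => ?_
  obtain rfl | hx := eq_or_ne x 0
  · exact contDiffAt_const.congr_of_eventuallyEq (hψ.radialCutoff_eventuallyEq_one hρ)
  · exact (contDiff_intervalIntegral_left hψ.continuous).contDiffAt.comp x (contDiffAt_norm ℝ hx)

lemma norm_fderiv_radialCutoff_le (hρ : 0 ≤ ρ) (hψ : IsCutoffDensity ρ σ ψ) (x : E) :
    ‖fderiv ℝ (radialCutoff σ ψ) x‖ ≤ ψ ‖x‖ := by
  obtain rfl | hx := eq_or_ne x 0
  · rw [(hψ.radialCutoff_eventuallyEq_one hρ).fderiv_eq]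
    simpa using hψ.nonneg 0
  · have hnorm := ((contDiffAt_norm ℝ hx (n := 1)).differentiableAt one_ne_zero).hasFDerivAt
    have hfderiv : fderiv ℝ (radialCutoff σ ψ) x = -ψ ‖x‖ • fderiv ℝ (fun x : E => ‖x‖) x :=
      ((hasDerivAt_intervalIntegral_left hψ.continuous ‖x‖).comp_hasFDerivAt x hnorm).fderiv
    rw [hfderiv, norm_smul, norm_neg, Real.norm_of_nonneg (hψ.nonneg _)]
    refine mul_le_of_le_one_right (hψ.nonneg _) ?_
    simpa using norm_fderiv_le_of_lipschitz ℝ (lipschitzWith_one_norm (E := E)) (x₀ := x)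

end IsCutoffDensity

end RadialCutoff

section OptimizedCutoff

lemma integrable_rpow_of_le_one {α : Type*} {mα : MeasurableSpace α} {μ : Measure α}
    [IsFiniteMeasure μ] {f : α → ℝ} (hf : Integrable f μ) (hf0 : ∀ x, 0 ≤ f x) {δ : ℝ}
    (hδ0 : 0 ≤ δ) (hδ1 : δ ≤ 1) : Integrable (fun x => f x ^ δ) μ := by
  have hLδ : MemLp f (ENNReal.ofReal δ) μ := (memLp_one_iff_integrable.2 hf).mono_exponent
    (ENNReal.ofReal_le_one.2 hδ1)
  simpa only [Real.norm_of_nonneg (hf0 _), ENNReal.toReal_ofReal hδ0] using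
    hLδ.integrable_norm_rpow'

variable {E : Type*} [NormedAddCommGroup E] [InnerProductSpace ℝ E] [FiniteDimensional ℝ E]
  [MeasurableSpace E] [BorelSpace E] {ρ σ s δ : ℝ} {ψ : ℝ → ℝ} {v : E → ℝ}

namespace IsCutoffDensity

lemma integrable_abs_mul_rpow (hψ : IsCutoffDensity ρ σ ψ) (hs : 0 < s)
    (hv : IntegrableOn v (ball 0 σ)) : Integrable fun x => |v x| * ψ ‖x‖ ^ s := by
  obtain ⟨M, hM⟩ := hψ.hasCompactSupport.exists_bound_of_continuous hψ.continuous
  have hint : IntegrableOn (fun x => |v x| * ψ ‖x‖ ^ s) (ball 0 σ) := by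
    refine hv.abs.mul_bdd (c := M ^ s) ((hψ.continuous.comp continuous_norm).rpow_const
      fun _ => .inr hs.le).aestronglyMeasurable (.of_forall fun x => ?_)
    rw [Real.norm_of_nonneg (Real.rpow_nonneg (hψ.nonneg _) s)]
    exact Real.rpow_le_rpow (hψ.nonneg _) ((le_abs_self _).trans (hM _)) hs.le
  refine hint.integrable_of_forall_notMem_eq_zero fun x hx => ?_
  rw [hψ.apply_eq_zero fun h => hx (mem_ball_zero_iff.2 h.2), Real.zero_rpow hs.ne', mul_zero]

lemma setIntegral_norm_fderiv_radialCutoff_rpow_le [Nontrivial E] (hρ : 0 ≤ ρ)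
    (hψ : IsCutoffDensity ρ σ ψ) (hs : 0 < s) (hv : IntegrableOn v (ball 0 σ)) :
    ∫ x in ball (0 : E) σ, |v x| * ‖fderiv ℝ (radialCutoff σ ψ) x‖ ^ s ≤
      ∫ r in Ioo ρ σ, sphereIntegral (fun x => |v x|) r * ψ r ^ s := by
  have hint := hψ.integrable_abs_mul_rpow hs hv
  have hnonneg (x : E) : 0 ≤ |v x| * ψ ‖x‖ ^ s :=
    mul_nonneg (abs_nonneg _) (Real.rpow_nonneg (hψ.nonneg _) s)
  calc ∫ x in ball (0 : E) σ, |v x| * ‖fderiv ℝ (radialCutoff σ ψ) x‖ ^ s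
      ≤ ∫ x in ball (0 : E) σ, |v x| * ψ ‖x‖ ^ s := by
        refine integral_mono_of_nonneg (.of_forall fun x => by positivity) hint.integrableOn
          (.of_forall fun x => mul_le_mul_of_nonneg_left ?_ (abs_nonneg _))
        exact Real.rpow_le_rpow (norm_nonneg _) (hψ.norm_fderiv_radialCutoff_le hρ x) hs.le
    _ ≤ ∫ x, |v x| * ψ ‖x‖ ^ s := setIntegral_le_integral hint (.of_forall hnonneg)
    _ ≤ ∫ r in Ioi 0, sphereIntegral (fun x => |v x| * ψ ‖x‖ ^ s) r :=
        integral_le_integral_sphereIntegral hint hnonneg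
    _ = ∫ r in Ioi 0, sphereIntegral (fun x => |v x|) r * ψ r ^ s := by
        simp only [sphereIntegral_mul_comp_norm (fun x => |v x|) fun r => ψ r ^ s]
    _ = ∫ r in Ioo ρ σ, sphereIntegral (fun x => |v x|) r * ψ r ^ s := by
        refine setIntegral_eq_of_subset_of_forall_sdiff_eq_zero measurableSet_Ioi
          (fun r hr => hρ.trans_lt hr.1) fun r hr => ?_
        rw [hψ.apply_eq_zero hr.2, Real.zero_rpow hs.ne', mul_zero]

end IsCutoffDensity

theorem optimized_cutoff_lemma_general [Nontrivial E] (hρ : 0 ≤ ρ) (hρσ : ρ < σ)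
    (hv : IntegrableOn v (ball 0 σ)) (hs : 1 < s) (hδ : 0 < δ)
    (hvδ : IntegrableOn (fun r => sphereIntegral (fun x => |v x|) r ^ δ) (Ioo ρ σ)) :
    sInf {I : ℝ | ∃ η : E → ℝ, ContDiff ℝ 1 η ∧ HasCompactSupport η ∧ tsupport η ⊆ ball 0 σ ∧
        (∀ x, 0 ≤ η x) ∧ (∀ x ∈ ball 0 ρ, η x = 1) ∧
        I = ∫ x in ball 0 σ, |v x| * ‖fderiv ℝ η x‖ ^ s}
      ≤ (σ - ρ) ^ (-(s - 1 + 1 / δ)) *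
        (∫ r in Ioo ρ σ, sphereIntegral (fun x => |v x|) r ^ δ) ^ (1 / δ) := by
  refine le_of_forall_gt fun κ hκ => ?_
  have hf : IntegrableOn (sphereIntegral fun x => |v x|) (Ioo ρ σ) :=
    (integrableOn_sphereIntegral_Ioo hv.abs).mono_set (Ioo_subset_Ioo_left hρ)
  obtain ⟨ψ, hψ, hψκ⟩ := exists_isCutoffDensity_of_lt hρσ
    (sphereIntegral_nonneg fun x => abs_nonneg (v x)) hf hs hδ hvδ hκ
  refine lt_of_le_of_lt (csInf_le ⟨0, ?_⟩ ⟨radialCutoff σ ψ, hψ.contDiff_radialCutoff hρ,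
    hψ.hasCompactSupport_radialCutoff, hψ.tsupport_radialCutoff_subset, hψ.radialCutoff_nonneg,
    fun _ => hψ.radialCutoff_eq_one, rfl⟩)
    ((hψ.setIntegral_norm_fderiv_radialCutoff_rpow_le hρ (by linarith) hv).trans_lt hψκ)
  rintro _ ⟨η, -, -, -, -, -, rfl⟩
  exact integral_nonneg fun x => by positivity

end OptimizedCutoff

/-- **Optimized cut-off lemma (Lemma 2.1).** For `0 < ρ < σ`, `v ∈ L¹(B_σ)`, `s > 1` and
`δ ∈ (0,1]`, the infimum `J(ρ,σ,v)` of `∫_{B_σ} |v| |∇η|^s` over all `η ∈ C₀¹(B_σ)`,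
`η ≥ 0`, `η = 1` on `B_ρ`, satisfies
`J(ρ,σ,v) ≤ (σ−ρ)^{−(s−1+1/δ)} (∫_ρ^σ (∫_{S_r} |v| dH^{n−1})^δ dr)^{1/δ}`. -/
theorem optimized_cutoff_lemma
    (n : ℕ) (hn : 2 ≤ n) (ρ σ : ℝ) (hρ : 0 < ρ) (hρσ : ρ < σ)
    (v : EuclideanSpace ℝ (Fin n) → ℝ)
    (hv : IntegrableOn v (ball (0 : EuclideanSpace ℝ (Fin n)) σ))
    (s : ℝ) (hs : 1 < s) (δ : ℝ) (hδ0 : 0 < δ) (hδ1 : δ ≤ 1) :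
    sInf {I : ℝ | ∃ η : EuclideanSpace ℝ (Fin n) → ℝ,
        ContDiff ℝ 1 η ∧ HasCompactSupport η ∧
        tsupport η ⊆ ball (0 : EuclideanSpace ℝ (Fin n)) σ ∧
        (∀ x, 0 ≤ η x) ∧ (∀ x ∈ ball (0 : EuclideanSpace ℝ (Fin n)) ρ, η x = 1) ∧
        I = ∫ x in ball (0 : EuclideanSpace ℝ (Fin n)) σ, |v x| * ‖fderiv ℝ η x‖ ^ s}
      ≤ (σ - ρ) ^ (-(s - 1 + 1 / δ)) *
        (∫ r in Ioo ρ σ,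
          (∫ x in sphere (0 : EuclideanSpace ℝ (Fin n)) r, |v x| ∂μH[(n : ℝ) - 1]) ^ δ)
          ^ (1 / δ) := by
  have : Nontrivial (EuclideanSpace ℝ (Fin n)) := by
    have : Nontrivial (Fin n) := Fin.nontrivial_iff_two_le.2 hn
    infer_instance
  have hf : IntegrableOn (sphereIntegral fun x => |v x|) (Ioo ρ σ) :=
    (integrableOn_sphereIntegral_Ioo hv.abs).mono_set (Ioo_subset_Ioo_left hρ.le)
  simpa only [sphereIntegral, finrank_euclideanSpace_fin] using
    optimized_cutoff_lemma_general hρ.le hρσ hv hs hδ0 (integrable_rpow_of_le_one hf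
      (sphereIntegral_nonneg fun x => abs_nonneg (v x)) hδ0.le hδ1)
end
end

section
/- Let 0 < ρ < σ < ∞, s > 1, ε > 0, and let b : (ρ,σ) → [ε,∞) be an integrable function bounded below by ε. Then the infimum of ∫_ρ^σ |η'(r)|^s b(r) dr over all η ∈ W^{1,∞}(ρ,σ) with η(ρ) = 1 and η(σ) = 0 equals ( ∫_ρ^σ b(r)^{−1/(s−1)} dr )^{−(s−1)}; moreover the infimum is attained by η̃(r) := 1 − ( ∫_ρ^σ b^{−1/(s−1)} )^{−1} ∫_ρ^r b^{−1/(s−1)}. -/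
open MeasureTheory Set
open scoped ENNReal NNReal Topology

noncomputable section

/-!
With `w = b^{-1/(s-1)}`, Hölder's inequality applied to `η' = (|η'|^s b)^{1/s} w^{(s-1)/s}` (up to
sign) gives `|η(σ) - η(ρ)|^s ≤ (∫ |η'|^s b) (∫ w)^{s-1}`. Equality holds when `η'` is proportional
to `w`, because `w^s b = w`, and this determines the minimizer.
-/

section Integral

variable {α : Type*} [MeasurableSpace α] {μ : Measure α}

lemma integral_pos_of_ae_pos {f : α → ℝ} (hμ : μ ≠ 0) (hf : Integrable f μ)
    (hpos : ∀ᵐ x ∂μ, 0 < f x) : 0 < ∫ x, f x ∂μ := by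
  have hnonneg : 0 ≤ᵐ[μ] f := hpos.mono fun _ hx => hx.le
  refine (integral_nonneg_of_ae hnonneg).lt_of_ne' fun h0 => hμ ?_
  rw [integral_eq_zero_iff_of_nonneg_ae hnonneg hf] at h0
  rw [← ae_eq_bot, ← Filter.eventually_false_iff_eq_bot]
  filter_upwards [h0, hpos] with x hx0 hx using hx.ne' hx0

lemma memLp_rpow_inv {p : ℝ} (hp : 0 < p) {u : α → ℝ} (hu0 : 0 ≤ᵐ[μ] u) (hu : Integrable u μ) :
    MemLp (fun x => u x ^ p⁻¹) (ENNReal.ofReal p) μ := by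
  have h := (memLp_one_iff_integrable.2 hu).norm_rpow_div (ENNReal.ofReal p⁻¹)
  rw [ENNReal.toReal_ofReal (by positivity), ENNReal.ofReal_inv_of_pos hp, one_div, inv_inv] at h
  refine h.ae_eq ?_
  filter_upwards [hu0] with x hx
  rw [Real.norm_of_nonneg hx]

lemma integral_rpow_inv_mul_rpow_inv_le {p q : ℝ} (hpq : p.HolderConjugate q) {u v : α → ℝ}
    (hu0 : 0 ≤ᵐ[μ] u) (hv0 : 0 ≤ᵐ[μ] v) (hu : Integrable u μ) (hv : Integrable v μ) :
    ∫ x, u x ^ p⁻¹ * v x ^ q⁻¹ ∂μ ≤ (∫ x, u x ∂μ) ^ p⁻¹ * (∫ x, v x ∂μ) ^ q⁻¹ := by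
  have rpow_inv_rpow_ae {r : ℝ} (hr : r ≠ 0) {f : α → ℝ} (hf : 0 ≤ᵐ[μ] f) :
      (fun x => (f x ^ r⁻¹) ^ r) =ᵐ[μ] f :=
    hf.mono fun x hx => Real.rpow_inv_rpow hx hr
  have rpow_nonneg_ae (r : ℝ) {f : α → ℝ} (hf : 0 ≤ᵐ[μ] f) : 0 ≤ᵐ[μ] fun x => f x ^ r :=
    hf.mono fun x hx => Real.rpow_nonneg hx r
  have holder := integral_mul_le_Lp_mul_Lq_of_nonneg hpq (rpow_nonneg_ae p⁻¹ hu0)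
    (rpow_nonneg_ae q⁻¹ hv0) (memLp_rpow_inv hpq.pos hu0 hu) (memLp_rpow_inv hpq.symm.pos hv0 hv)
  rwa [integral_congr_ae (rpow_inv_rpow_ae hpq.ne_zero hu0),
    integral_congr_ae (rpow_inv_rpow_ae hpq.symm.ne_zero hv0), one_div, one_div] at holder

end Integral

section DualWeight

variable {α : Type*} {s : ℝ} {b : α → ℝ}

/-- The dual weight `b^{-1/(s-1)}` of `b` at the exponent `s`, as in Muckenhoupt's `A_s` condition;
it is meaningful where `b` is positive. -/
def dualWeight (s : ℝ) (b : α → ℝ) (x : α) : ℝ :=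
  b x ^ (-(1 / (s - 1)))

lemma dualWeight_pos {x : α} (hb : 0 < b x) : 0 < dualWeight s b x :=
  Real.rpow_pos_of_pos hb _

lemma norm_dualWeight_le_rpow {ε : ℝ} {x : α} (hs : 1 ≤ s) (hε : 0 < ε) (hb : ε ≤ b x) :
    ‖dualWeight s b x‖ ≤ ε ^ (-(1 / (s - 1))) := by
  rw [Real.norm_of_nonneg (dualWeight_pos (hε.trans_le hb)).le]
  exact Real.rpow_le_rpow_of_nonpos hε hb (neg_nonpos.2 (one_div_nonneg.2 (sub_nonneg.2 hs)))

lemma dualWeight_rpow_mul {x : α} (hs : s ≠ 1) (hb : 0 < b x) :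
    dualWeight s b x ^ s * b x = dualWeight s b x := by
  have hs' : s - 1 ≠ 0 := sub_ne_zero.2 hs
  rw [dualWeight, ← Real.rpow_mul hb.le, ← Real.rpow_add_one hb.ne']
  congr 1
  field_simp
  ring

lemma rpow_mul_rpow_inv_mul_dualWeight_rpow {x : α} {y : ℝ} (hs : 1 < s) (hy : 0 ≤ y)
    (hb : 0 < b x) :
    (y ^ s * b x) ^ s⁻¹ * dualWeight s b x ^ s.conjExponent⁻¹ = y := by
  have hs0 : s ≠ 0 := by positivity
  have hs1 : s - 1 ≠ 0 := sub_ne_zero.2 hs.ne'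
  have hexp : s⁻¹ + -(1 / (s - 1)) * s.conjExponent⁻¹ = 0 := by
    rw [Real.conjExponent]
    field_simp
    ring
  rw [dualWeight, Real.mul_rpow (by positivity) hb.le, Real.rpow_rpow_inv hy hs0, mul_assoc,
    ← Real.rpow_mul hb.le, ← Real.rpow_add hb, hexp, Real.rpow_zero, mul_one]

variable [MeasurableSpace α] {μ : Measure α}

lemma integrable_dualWeight [IsFiniteMeasure μ] {ε : ℝ} (hs : 1 ≤ s) (hε : 0 < ε)
    (hb : AEMeasurable b μ) (hb_lb : ∀ᵐ x ∂μ, ε ≤ b x) : Integrable (dualWeight s b) μ :=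
  .of_bound (hb.pow_const _).aestronglyMeasurable _
    (hb_lb.mono fun _ hx => norm_dualWeight_le_rpow hs hε hx)

lemma integral_rpow_le_integral_rpow_mul_mul_integral_dualWeight_rpow {f : α → ℝ} (hs : 1 < s)
    (hf : 0 ≤ᵐ[μ] f) (hb : ∀ᵐ x ∂μ, 0 < b x) (hfb : Integrable (fun x => f x ^ s * b x) μ)
    (hw : Integrable (dualWeight s b) μ) :
    (∫ x, f x ∂μ) ^ s ≤ (∫ x, f x ^ s * b x ∂μ) * (∫ x, dualWeight s b x ∂μ) ^ (s - 1) := by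
  have hs0 : 0 < s := by positivity
  have hfb0 : 0 ≤ᵐ[μ] fun x => f x ^ s * b x := by
    filter_upwards [hf, hb] with x hfx hbx using mul_nonneg (Real.rpow_nonneg hfx s) hbx.le
  have hw0 : 0 ≤ᵐ[μ] dualWeight s b := hb.mono fun x hx => (dualWeight_pos hx).le
  have hW : 0 ≤ ∫ x, dualWeight s b x ∂μ := integral_nonneg_of_ae hw0
  have hfac : ∫ x, f x ∂μ
      = ∫ x, (f x ^ s * b x) ^ s⁻¹ * dualWeight s b x ^ s.conjExponent⁻¹ ∂μ := by
    refine integral_congr_ae ?_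
    filter_upwards [hf, hb] with x hfx hbx
      using (rpow_mul_rpow_inv_mul_dualWeight_rpow hs hfx hbx).symm
  have hexp : s.conjExponent⁻¹ * s = s - 1 := by
    rw [Real.conjExponent, inv_div, div_mul_cancel₀ _ hs0.ne']
  calc (∫ x, f x ∂μ) ^ s
      ≤ ((∫ x, f x ^ s * b x ∂μ) ^ s⁻¹ * (∫ x, dualWeight s b x ∂μ) ^ s.conjExponent⁻¹) ^ s := by
        refine Real.rpow_le_rpow (integral_nonneg_of_ae hf) ?_ hs0.le
        rw [hfac]
        exact integral_rpow_inv_mul_rpow_inv_le (.conjExponent hs) hfb0 hw0 hfb hw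
    _ = (∫ x, f x ^ s * b x ∂μ) * (∫ x, dualWeight s b x ∂μ) ^ (s - 1) := by
        rw [Real.mul_rpow (Real.rpow_nonneg (integral_nonneg_of_ae hfb0) _)
          (Real.rpow_nonneg hW _), Real.rpow_inv_rpow (integral_nonneg_of_ae hfb0) hs0.ne',
          ← Real.rpow_mul hW, hexp]

end DualWeight

section NormalizedTail

variable {w : ℝ → ℝ} {ρ σ : ℝ}

/-- The fraction `(∫_r^σ w) / (∫_ρ^σ w)` of the mass of `w` on `(ρ, σ)` lying to the right of `r`,
written as one minus the normalized primitive; it interpolates between `1` at `ρ` and `0` at `σ`.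
If the total mass is zero, then its inverse is `0` and the function is constantly `1`. -/
def normalizedTail (w : ℝ → ℝ) (ρ σ r : ℝ) : ℝ :=
  1 - (∫ t in ρ..σ, w t)⁻¹ * ∫ t in ρ..r, w t

lemma normalizedTail_left : normalizedTail w ρ σ ρ = 1 := by
  rw [normalizedTail, intervalIntegral.integral_same, mul_zero, sub_zero]

lemma normalizedTail_right (hw : ∫ t in ρ..σ, w t ≠ 0) : normalizedTail w ρ σ σ = 0 := by
  rw [normalizedTail, inv_mul_cancel₀ hw, sub_self]

lemma lipschitzOnWith_integral_of_ae_norm_le {E : Type*} [NormedAddCommGroup E] [NormedSpace ℝ E]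
    {f : ℝ → E} {C : ℝ≥0} (hf : IntegrableOn f (Ioo ρ σ))
    (hC : ∀ᵐ r ∂volume.restrict (Ioo ρ σ), ‖f r‖ ≤ C) :
    LipschitzOnWith C (fun r => ∫ t in ρ..r, f t) (Icc ρ σ) := by
  refine .of_dist_le_mul fun x hx y hy => ?_
  have hint {z : ℝ} (hz : z ∈ Icc ρ σ) : IntervalIntegrable f volume ρ z :=
    (intervalIntegrable_iff_integrableOn_Ioo_of_le hz.1).2
      (hf.mono_set (Ioo_subset_Ioo_right hz.2))
  rw [dist_eq_norm, intervalIntegral.integral_interval_sub_left (hint hx) (hint hy), Real.dist_eq]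
  refine intervalIntegral.norm_integral_le_of_norm_le_const_ae ?_
  rw [Measure.restrict_congr_set Ioo_ae_eq_Ioc, ae_restrict_iff' measurableSet_Ioc] at hC
  filter_upwards [hC] with t hCt ht
  exact hCt ⟨(le_min hy.1 hx.1).trans_lt ht.1, ht.2.trans (max_le hy.2 hx.2)⟩

lemma exists_lipschitzOnWith_normalizedTail {C : ℝ≥0} (hw : IntegrableOn w (Ioo ρ σ))
    (hC : ∀ᵐ r ∂volume.restrict (Ioo ρ σ), ‖w r‖ ≤ C) :
    ∃ K : ℝ≥0, LipschitzOnWith K (normalizedTail w ρ σ) (Icc ρ σ) := by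
  have haff : LipschitzWith ‖(∫ t in ρ..σ, w t)⁻¹‖₊ fun x => 1 - (∫ t in ρ..σ, w t)⁻¹ * x :=
    .of_dist_le_mul fun x y => by
      rw [dist_sub_left, dist_eq_norm, ← mul_sub, norm_mul, dist_eq_norm, coe_nnnorm]
  exact ⟨_, haff.comp_lipschitzOnWith (lipschitzOnWith_integral_of_ae_norm_le hw hC)⟩

lemma ae_hasDerivAt_normalizedTail (hρσ : ρ ≤ σ) (hw : IntegrableOn w (Ioo ρ σ)) :
    ∀ᵐ r ∂volume.restrict (Ioo ρ σ),
      HasDerivAt (normalizedTail w ρ σ) (-((∫ t in ρ..σ, w t)⁻¹ * w r)) r := by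
  have hw' := (intervalIntegrable_iff_integrableOn_Ioo_of_le hρσ).2 hw
  rw [ae_restrict_iff' measurableSet_Ioo]
  filter_upwards [hw'.ae_hasDerivAt_integral] with r hr hmem
  have hprim := hr (Ioo_subset_Icc_self.trans Icc_subset_uIcc hmem) ρ left_mem_uIcc
  exact (hprim.const_mul _).const_sub 1

end NormalizedTail

section WeightedEnergy

variable {ρ σ s : ℝ} {b : ℝ → ℝ}

lemma integrableOn_abs_deriv_rpow_mul_of_lipschitzOnWith {η : ℝ → ℝ} {K : ℝ≥0} (hs : 0 ≤ s)
    (hb : IntegrableOn b (Ioo ρ σ)) (hη : LipschitzOnWith K η (Icc ρ σ)) :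
    IntegrableOn (fun r => |deriv η r| ^ s * b r) (Ioo ρ σ) := by
  refine Integrable.bdd_mul (c := (K : ℝ) ^ s) hb
    ((measurable_deriv η).abs.pow_const s).aestronglyMeasurable ?_
  filter_upwards [ae_restrict_mem measurableSet_Ioo] with r hr
  have hK : |deriv η r| ≤ K := norm_deriv_le_of_lipschitzOn (Icc_mem_nhds hr.1 hr.2) hη
  rw [Real.norm_of_nonneg (by positivity)]
  exact Real.rpow_le_rpow (abs_nonneg _) hK hs

lemma abs_sub_rpow_le_integral_mul_integral_dualWeight_rpow {η : ℝ → ℝ} (hρσ : ρ ≤ σ) (hs : 1 < s)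
    (hb : ∀ᵐ r ∂volume.restrict (Ioo ρ σ), 0 < b r)
    (hw : IntegrableOn (dualWeight s b) (Ioo ρ σ)) (hη : AbsolutelyContinuousOnInterval η ρ σ)
    (hE : IntegrableOn (fun r => |deriv η r| ^ s * b r) (Ioo ρ σ)) :
    |η σ - η ρ| ^ s ≤ (∫ r in Ioo ρ σ, |deriv η r| ^ s * b r)
      * (∫ r in ρ..σ, dualWeight s b r) ^ (s - 1) := by
  have hvar : |η σ - η ρ| ≤ ∫ r in Ioo ρ σ, |deriv η r| := by
    rw [← hη.integral_deriv_eq_sub, intervalIntegral.integral_of_le hρσ,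
      integral_Ioc_eq_integral_Ioo]
    exact abs_integral_le_integral_abs
  rw [intervalIntegral.integral_of_le hρσ, integral_Ioc_eq_integral_Ioo]
  exact (Real.rpow_le_rpow (abs_nonneg _) hvar (by positivity)).trans
    (integral_rpow_le_integral_rpow_mul_mul_integral_dualWeight_rpow hs
      (ae_of_all _ fun _ => abs_nonneg _) hb hE hw)

lemma integral_dualWeight_pos (hρσ : ρ < σ) (hb : ∀ᵐ r ∂volume.restrict (Ioo ρ σ), 0 < b r)
    (hw : IntegrableOn (dualWeight s b) (Ioo ρ σ)) :
    0 < ∫ r in ρ..σ, dualWeight s b r := by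
  rw [intervalIntegral.integral_of_le hρσ.le, integral_Ioc_eq_integral_Ioo]
  refine integral_pos_of_ae_pos ?_ hw (hb.mono fun _ hr => dualWeight_pos hr)
  rw [Ne, Measure.restrict_eq_zero]
  exact ((Measure.measure_Ioo_pos volume).2 hρσ).ne'

lemma abs_deriv_normalizedTail_dualWeight_rpow_mul_ae_eq (hρσ : ρ ≤ σ) (hs : s ≠ 1)
    (hb : ∀ᵐ r ∂volume.restrict (Ioo ρ σ), 0 < b r)
    (hw : IntegrableOn (dualWeight s b) (Ioo ρ σ)) :
    (fun r => |deriv (normalizedTail (dualWeight s b) ρ σ) r| ^ s * b r)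
      =ᵐ[volume.restrict (Ioo ρ σ)]
        fun r => |(∫ t in ρ..σ, dualWeight s b t)⁻¹| ^ s * dualWeight s b r := by
  filter_upwards [ae_hasDerivAt_normalizedTail hρσ hw, hb] with r hderiv hbr
  have hwr := dualWeight_pos (s := s) hbr
  rw [hderiv.deriv, abs_neg, abs_mul, abs_of_pos hwr, Real.mul_rpow (abs_nonneg _) hwr.le,
    mul_assoc, dualWeight_rpow_mul hs hbr]

lemma integrableOn_abs_deriv_normalizedTail_dualWeight_rpow_mul (hρσ : ρ ≤ σ) (hs : s ≠ 1)
    (hb : ∀ᵐ r ∂volume.restrict (Ioo ρ σ), 0 < b r)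
    (hw : IntegrableOn (dualWeight s b) (Ioo ρ σ)) :
    IntegrableOn (fun r => |deriv (normalizedTail (dualWeight s b) ρ σ) r| ^ s * b r)
      (Ioo ρ σ) :=
  (hw.const_mul _).congr (abs_deriv_normalizedTail_dualWeight_rpow_mul_ae_eq hρσ hs hb hw).symm

lemma integral_abs_deriv_normalizedTail_dualWeight_rpow_mul (hρσ : ρ < σ) (hs : s ≠ 1)
    (hb : ∀ᵐ r ∂volume.restrict (Ioo ρ σ), 0 < b r)
    (hw : IntegrableOn (dualWeight s b) (Ioo ρ σ)) :
    ∫ r in Ioo ρ σ, |deriv (normalizedTail (dualWeight s b) ρ σ) r| ^ s * b r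
      = (∫ r in ρ..σ, dualWeight s b r) ^ (-(s - 1)) := by
  have hW := integral_dualWeight_pos hρσ hb hw
  rw [integral_congr_ae (abs_deriv_normalizedTail_dualWeight_rpow_mul_ae_eq hρσ.le hs hb hw),
    integral_const_mul, ← integral_Ioc_eq_integral_Ioo, ← intervalIntegral.integral_of_le hρσ.le,
    abs_of_pos (inv_pos.2 hW), Real.inv_rpow hW.le, ← Real.rpow_neg hW.le,
    ← Real.rpow_add_one hW.ne', neg_sub, neg_add_eq_sub]

end WeightedEnergy

/-- Competitors are required to have finite energy because the Bochner integral of a nonintegrable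
function is `0`. -/
theorem one_dimensional_weighted_minimization_general
    {ρ σ s ε : ℝ} (hρσ : ρ < σ) (hs : 1 < s) (hε : 0 < ε) {b : ℝ → ℝ}
    (hb : AEMeasurable b (volume.restrict (Ioo ρ σ)))
    (hb_lb : ∀ᵐ r ∂volume.restrict (Ioo ρ σ), ε ≤ b r) :
    (∀ η : ℝ → ℝ, AbsolutelyContinuousOnInterval η ρ σ →
      IntegrableOn (fun r => |deriv η r| ^ s * b r) (Ioo ρ σ) → η ρ = 1 → η σ = 0 →
      (∫ r in ρ..σ, dualWeight s b r) ^ (-(s - 1)) ≤ ∫ r in Ioo ρ σ, |deriv η r| ^ s * b r) ∧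
    IntegrableOn (fun r => |deriv (normalizedTail (dualWeight s b) ρ σ) r| ^ s * b r)
      (Ioo ρ σ) ∧
    (∃ K : ℝ≥0, LipschitzOnWith K (normalizedTail (dualWeight s b) ρ σ) (Icc ρ σ)) ∧
    normalizedTail (dualWeight s b) ρ σ ρ = 1 ∧
    normalizedTail (dualWeight s b) ρ σ σ = 0 ∧
    ∫ r in Ioo ρ σ, |deriv (normalizedTail (dualWeight s b) ρ σ) r| ^ s * b r
      = (∫ r in ρ..σ, dualWeight s b r) ^ (-(s - 1)) := by
  have hb0 : ∀ᵐ r ∂volume.restrict (Ioo ρ σ), 0 < b r := hb_lb.mono fun r hr => hε.trans_le hr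
  have hw : IntegrableOn (dualWeight s b) (Ioo ρ σ) := integrable_dualWeight hs.le hε hb hb_lb
  have hW := integral_dualWeight_pos hρσ hb0 hw
  have hbound := hb_lb.mono fun _ hr => norm_dualWeight_le_rpow hs.le hε hr
  refine ⟨fun η hη hE hη1 hη0 => ?_,
    integrableOn_abs_deriv_normalizedTail_dualWeight_rpow_mul hρσ.le hs.ne' hb0 hw,
    exists_lipschitzOnWith_normalizedTail (C := ⟨_, by positivity⟩) hw hbound,
    normalizedTail_left, normalizedTail_right hW.ne',
    integral_abs_deriv_normalizedTail_dualWeight_rpow_mul hρσ hs.ne' hb0 hw⟩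
  have h := abs_sub_rpow_le_integral_mul_integral_dualWeight_rpow hρσ.le hs hb0 hw hη hE
  rw [hη1, hη0, zero_sub, abs_neg, abs_one, Real.one_rpow] at h
  rwa [Real.rpow_neg hW.le, inv_le_iff_one_le_mul₀ (Real.rpow_pos_of_pos hW _)]

/-- **Explicit solution of the one-dimensional weighted minimization problem.**
For `0 < ρ < σ`, `s > 1` and an integrable weight `b ≥ ε > 0` on `(ρ,σ)`, the infimum of
`∫_ρ^σ |η'(r)|^s b(r) dr` over all Lipschitz `η` on `[ρ,σ]` with `η(ρ) = 1`, `η(σ) = 0`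
equals `(∫_ρ^σ b^{−1/(s−1)})^{−(s−1)}`, and is attained by
`η̃(r) = 1 − (∫_ρ^σ b^{−1/(s−1)})⁻¹ ∫_ρ^r b^{−1/(s−1)}`. -/
theorem one_dimensional_weighted_minimization
    (ρ σ s ε : ℝ) (hρ : 0 < ρ) (hρσ : ρ < σ) (hs : 1 < s) (hε : 0 < ε)
    (b : ℝ → ℝ) (hb_int : IntegrableOn b (Ioo ρ σ))
    (hb_lb : ∀ r ∈ Ioo ρ σ, ε ≤ b r) :
    (∀ η : ℝ → ℝ, (∃ K : ℝ≥0, LipschitzOnWith K η (Icc ρ σ)) →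
      η ρ = 1 → η σ = 0 →
      (∫ r in ρ..σ, b r ^ (-(1 / (s - 1)))) ^ (-(s - 1))
        ≤ ∫ r in Ioo ρ σ, |deriv η r| ^ s * b r) ∧
    (∃ K : ℝ≥0, LipschitzOnWith K
      (fun r => 1 - (∫ t in ρ..σ, b t ^ (-(1 / (s - 1))))⁻¹ *
        ∫ t in ρ..r, b t ^ (-(1 / (s - 1)))) (Icc ρ σ)) ∧
    (1 - (∫ t in ρ..σ, b t ^ (-(1 / (s - 1))))⁻¹ *
        ∫ t in ρ..ρ, b t ^ (-(1 / (s - 1)))) = 1 ∧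
    (1 - (∫ t in ρ..σ, b t ^ (-(1 / (s - 1))))⁻¹ *
        ∫ t in ρ..σ, b t ^ (-(1 / (s - 1)))) = 0 ∧
    (∫ r in Ioo ρ σ,
        |deriv (fun r' => 1 - (∫ t in ρ..σ, b t ^ (-(1 / (s - 1))))⁻¹ *
          ∫ t in ρ..r', b t ^ (-(1 / (s - 1)))) r| ^ s * b r)
      = (∫ r in ρ..σ, b r ^ (-(1 / (s - 1)))) ^ (-(s - 1)) := by
  obtain ⟨hmin, -, htail⟩ := one_dimensional_weighted_minimization_general hρσ hs hε
    hb_int.aemeasurable (ae_restrict_of_forall_mem measurableSet_Ioo hb_lb)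
  exact ⟨fun η ⟨_, hη⟩ => hmin η (uIcc_of_le hρσ.le ▸ hη).absolutelyContinuousOnInterval
    (integrableOn_abs_deriv_rpow_mul_of_lipschitzOnWith (by positivity) hb_int hη), htail⟩
end
end
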